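/- Under Assumptions A1 and A2, for every γ ≥ 0, every integer q ≥ 1, every function g ∈ L_{W^γ} (with W = log V) and every n ≥ 1, E_π[|S_n|^{2q}] ≤ μ_q·(Var_π(S_n))^q + C_0^{2q}·(2γ)^{2γq}·‖ḡ‖_{W^γ}^{2q}·Σ_{u=1}^{q−1} B_γ(u,q)·n^u / (ρ^{u/2}·(log(1/ρ))^{2q−u}), where C_0 = 2cπ(V) (with the convention 0^0 = 1). -/

import Mathlib

open MeasureTheory ProbabilityTheory Finset
open scoped ENNReal Classical

noncomputable section

/-- `n`-th iterate of a Markov kernel. -/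
def kIter {Y : Type*} [MeasurableSpace Y] (Q : ProbabilityTheory.Kernel Y Y) :
    ℕ → ProbabilityTheory.Kernel Y Y
  | 0 => ProbabilityTheory.Kernel.id
  | n + 1 => (kIter Q n).comp Q

/-- `U`-weighted total variation distance between two finite measures:
`∫ U d|μ - ν|`, via the Jordan decomposition of `μ - ν`. -/
def wTV {Y : Type*} [MeasurableSpace Y] (U : Y → ℝ) (μ ν : Measure Y) : ℝ :=
  (∫ x, U x ∂(μ - ν)) + ∫ x, U x ∂(ν - μ)

/-- `U`-weighted sup norm `‖g‖_U = sup_x |g x| / U x`. -/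
def vnorm {Y : Type*} (U : Y → ℝ) (g : Y → ℝ) : ℝ := ⨆ x, |g x| / U x

/-- Membership in the class `L_U`: measurable with finite `U`-weighted sup norm. -/
structure MemL {Y : Type*} [MeasurableSpace Y] (U : Y → ℝ) (g : Y → ℝ) : Prop where
  meas : Measurable g
  bdd : BddAbove (Set.range fun x => |g x| / U x)

/-- `(Xs n)` is a Markov chain with initial distribution `ξ` and Markov kernel `Q`:
the law of `Xs 0` is `ξ` and, conditionally on the past up to time `n`, the
distribution of `Xs (n+1)` is `Q (Xs n)`. -/
structure IsMarkovChain {X : Type*} [MeasurableSpace X] {Ω : Type*} [MeasurableSpace Ω]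
    (P : Measure Ω) (Xs : ℕ → Ω → X) (ξ : Measure X)
    (Q : ProbabilityTheory.Kernel X X) : Prop where
  meas : ∀ n, Measurable (Xs n)
  init : P.map (Xs 0) = ξ
  markov : ∀ (n : ℕ) (f : X → ℝ), Measurable f → (∀ x, |f x| ≤ 1) →
    (P[fun ω => f (Xs (n + 1) ω) |
        ⨆ i ∈ Finset.range (n + 1), MeasurableSpace.comap (Xs i) inferInstance])
      =ᵐ[P] fun ω => ∫ y, f y ∂(Q (Xs n ω))

/-- The combinatorial coefficient `B_γ(u,q)`. -/
def Bcoef (γ : ℝ) (u q : ℕ) : ℝ :=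
  ((2 * q).factorial : ℝ) / (u.factorial : ℝ) *
    ∑ k ∈ Finset.univ.filter
        (fun k : Fin u → Fin (2 * q + 1) =>
          (∀ i, 2 ≤ (k i : ℕ)) ∧ ∑ i, (k i : ℕ) = 2 * q),
      ∏ i, ((k i : ℕ).factorial : ℝ) ^ (γ + 2)

/-- The `2q`-th moment `(2q)!/(q! 2^q)` of the standard Gaussian. -/
def gaussMoment (q : ℕ) : ℝ := ((2 * q).factorial : ℝ) / ((q.factorial : ℝ) * 2 ^ q)



/-! ## Part A: power series -/
namespace RosA
open PowerSeries

/-- All coefficients nonnegative. -/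
def Pos (f : PowerSeries ℝ) : Prop := ∀ m, 0 ≤ coeff m f

/-- `g` majorizes `f` coefficientwise. -/
def Maj (f g : PowerSeries ℝ) : Prop := ∀ m, |coeff m f| ≤ coeff m g

lemma Pos.add {f g : PowerSeries ℝ} (hf : Pos f) (hg : Pos g) : Pos (f + g) := fun m => by
  simpa using add_nonneg (hf m) (hg m)

lemma Pos.mul {f g : PowerSeries ℝ} (hf : Pos f) (hg : Pos g) : Pos (f * g) := fun m => by
  rw [coeff_mul]; exact Finset.sum_nonneg fun p _ => mul_nonneg (hf _) (hg _)

lemma Pos.one : Pos (1 : PowerSeries ℝ) := fun m => by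
  rw [coeff_one]; split_ifs <;> norm_num

lemma Pos.zero : Pos (0 : PowerSeries ℝ) := fun m => by simp

lemma Pos.C {x : ℝ} (hx : 0 ≤ x) : Pos (C x : PowerSeries ℝ) := fun m => by
  rw [coeff_C]; split_ifs <;> simp [hx]

lemma Pos.X : Pos (X : PowerSeries ℝ) := fun m => by
  rw [coeff_X]; split_ifs <;> norm_num

lemma Pos.pow {f : PowerSeries ℝ} (hf : Pos f) (n : ℕ) : Pos (f ^ n) := by
  induction n with
  | zero => simpa using Pos.one
  | succ n ih => rw [pow_succ]; exact ih.mul hf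

lemma Pos.sum {ι : Type*} {s : Finset ι} {f : ι → PowerSeries ℝ} (h : ∀ i ∈ s, Pos (f i)) :
    Pos (∑ i ∈ s, f i) := fun m => by
  rw [map_sum]; exact Finset.sum_nonneg fun i hi => h i hi m

lemma Maj.pos {f g : PowerSeries ℝ} (h : Maj f g) : Pos g := fun m => (abs_nonneg _).trans (h m)

lemma Maj.add {f g f' g' : PowerSeries ℝ} (h : Maj f g) (h' : Maj f' g') :
    Maj (f + f') (g + g') := fun m => by
  simp only [map_add]
  exact (abs_add_le _ _).trans (add_le_add (h m) (h' m))

lemma Maj.sub {f g f' g' : PowerSeries ℝ} (h : Maj f g) (h' : Maj f' g') :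
    Maj (f - f') (g + g') := fun m => by
  simp only [map_add, map_sub]
  exact (abs_sub _ _).trans (add_le_add (h m) (h' m))

lemma Maj.mul {f g f' g' : PowerSeries ℝ} (h : Maj f g) (h' : Maj f' g') :
    Maj (f * f') (g * g') := fun m => by
  rw [coeff_mul, coeff_mul]
  refine (Finset.abs_sum_le_sum_abs _ _).trans (Finset.sum_le_sum fun p _ => ?_)
  rw [abs_mul]
  exact mul_le_mul (h _) (h' _) (abs_nonneg _) ((abs_nonneg _).trans (h _))

lemma Maj.sum {ι : Type*} {s : Finset ι} {f g : ι → PowerSeries ℝ}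
    (h : ∀ i ∈ s, Maj (f i) (g i)) :
    Maj (∑ i ∈ s, f i) (∑ i ∈ s, g i) := fun m => by
  rw [map_sum, map_sum]
  exact (Finset.abs_sum_le_sum_abs _ _).trans (Finset.sum_le_sum fun i hi => h i hi m)

lemma Maj.mono {f g g' : PowerSeries ℝ} (h : Maj f g) (h' : Pos (g' - g)) : Maj f g' :=
  fun m => (h m).trans (by have := h' m; simp at this; linarith)

/-- Coefficientwise absolute value. -/
def pabs (f : PowerSeries ℝ) : PowerSeries ℝ := PowerSeries.mk fun m => |coeff m f|

lemma Maj.pabs (f : PowerSeries ℝ) : Maj f (pabs f) := fun m => by simp [RosA.pabs]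

/-- The exponential of a power series without constant term. -/
def pexp (f : PowerSeries ℝ) : PowerSeries ℝ :=
  PowerSeries.mk fun m => ∑ u ∈ range (m + 1), coeff m (f ^ u) / (u.factorial : ℝ)

lemma coeff_pow_zero_of_lt {f : PowerSeries ℝ} (hf : constantCoeff f = 0) {m u : ℕ} (h : m < u) :
    coeff m (f ^ u) = 0 :=
  coeff_of_lt_order _ (lt_of_lt_of_le (by exact_mod_cast h)
    (le_order_pow_of_constantCoeff_eq_zero u hf))

lemma coeff_pexp {f : PowerSeries ℝ} (hf : constantCoeff f = 0) {m N : ℕ} (h : m < N) :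
    coeff m (pexp f) = ∑ u ∈ range N, coeff m (f ^ u) / (u.factorial : ℝ) := by
  rw [pexp, coeff_mk]
  refine Finset.sum_subset (by intro x; simp; omega) fun x _ hx => ?_
  rw [coeff_pow_zero_of_lt hf (by simp at hx; omega)]; simp

lemma pexp_pos {f : PowerSeries ℝ} (h : Pos f) : Pos (pexp f) := fun m => by
  rw [pexp, coeff_mk]
  exact Finset.sum_nonneg fun u _ => div_nonneg (h.pow u m) (by positivity)

lemma pexp_sub_one_sub {f : PowerSeries ℝ} (h : Pos f) (hf : constantCoeff f = 0) :
    Pos (pexp f - 1 - f) := fun m => by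
  rw [map_sub, map_sub, coeff_pexp hf (N := m + 2) (by omega)]
  rw [Finset.sum_range_succ', Finset.sum_range_succ']
  simp only [pow_zero, Nat.factorial]
  simp
  exact Finset.sum_nonneg fun u _ => div_nonneg (h.pow _ m) (by positivity)

lemma pexp_add {f g : PowerSeries ℝ} (hf : constantCoeff f = 0) (hg : constantCoeff g = 0) :
    pexp (f + g) = pexp f * pexp g := by
  ext m
  rw [coeff_mul]
  have h1 : ∀ p ∈ antidiagonal m, coeff p.1 (pexp f) * coeff p.2 (pexp g) =
      ∑ a ∈ range (m+1), ∑ b ∈ range (m+1), (coeff p.1 (f^a) * coeff p.2 (g^b)) /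
        ((a.factorial : ℝ) * b.factorial) := by
    intro p hp
    have := mem_antidiagonal.1 hp
    rw [coeff_pexp hf (N := m+1) (by omega), coeff_pexp hg (N := m+1) (by omega),
      Finset.sum_mul_sum]
    refine Finset.sum_congr rfl fun a _ => Finset.sum_congr rfl fun b _ => ?_
    rw [div_mul_div_comm]
  rw [Finset.sum_congr rfl h1, Finset.sum_comm]
  have h2 : ∀ a ∈ range (m+1), ∑ p ∈ antidiagonal m, ∑ b ∈ range (m+1),
      (coeff p.1 (f^a) * coeff p.2 (g^b)) / ((a.factorial : ℝ) * b.factorial) =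
      ∑ b ∈ range (m+1), coeff m (f^a * g^b) / ((a.factorial : ℝ) * b.factorial) := by
    intro a _
    rw [Finset.sum_comm]
    refine Finset.sum_congr rfl fun b _ => ?_
    rw [← Finset.sum_div, coeff_mul]
  rw [Finset.sum_congr rfl h2, pexp, coeff_mk]
  have h3 : ∀ u ∈ range (m+1), coeff m ((f+g)^u) / (u.factorial : ℝ) =
      ∑ p ∈ antidiagonal u, coeff m (f^p.1 * g^p.2) / ((p.1.factorial : ℝ) * p.2.factorial) := by
    intro u _
    rw [(Commute.all f g).add_pow', map_sum, Finset.sum_div]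
    refine Finset.sum_congr rfl fun p hp => ?_
    have hp' := mem_antidiagonal.1 hp
    rw [map_nsmul, nsmul_eq_mul]
    have := Nat.add_choose_mul_factorial_mul_factorial p.1 p.2
    rw [hp', Nat.choose_symm_of_eq_add (show u = p.2 + p.1 by omega)] at this
    have h' : ((u.choose p.1 : ℕ):ℝ) * p.1.factorial * p.2.factorial = u.factorial := by
      exact_mod_cast this
    rw [← h']
    have : ((u.choose p.1 : ℕ):ℝ) ≠ 0 := by
      have := Nat.choose_pos (show p.1 ≤ u by omega)
      positivity
    field_simp
  rw [Finset.sum_congr rfl h3, Finset.sum_sigma', ← Finset.sum_product']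
  refine Finset.sum_of_injOn (fun x => x.2) ?_ ?_ ?_ ?_
  · rintro ⟨u, p⟩ hx ⟨u', p'⟩ hx' h
    simp at hx hx' h
    subst h
    obtain ⟨_, rfl⟩ := hx
    obtain ⟨_, rfl⟩ := hx'
    rfl
  · rintro ⟨u, p⟩ hx
    simp at hx ⊢
    omega
  · rintro ⟨a, b⟩ hx hx'
    have : m < a + b := by
      by_contra hlt
      exact hx' ⟨⟨a + b, (a, b)⟩, by simp; omega, rfl⟩
    have : coeff m (f^a * g^b) = 0 := by
      refine coeff_of_lt_order _ (lt_of_lt_of_le ?_ (le_order_mul _ _))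
      refine lt_of_lt_of_le ?_ (add_le_add (le_order_pow_of_constantCoeff_eq_zero a hf)
        (le_order_pow_of_constantCoeff_eq_zero b hg))
      exact_mod_cast this
    simp [this]
  · rintro ⟨u, p⟩ hx
    rfl

/-- `exp (v X²)`. -/
def e2 (v : ℝ) : PowerSeries ℝ := pexp (C v * X ^ 2)

lemma cc_e2 (v : ℝ) : constantCoeff (C v * X ^ 2 : PowerSeries ℝ) = 0 := by simp

lemma e2_add (v w : ℝ) : e2 (v + w) = e2 v * e2 w := by
  rw [e2, e2, e2, ← pexp_add (cc_e2 v) (cc_e2 w)]; congr 1; rw [map_add]; ring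

lemma coeff_e2 (v : ℝ) (m : ℕ) :
    coeff m (e2 v) = if Even m then v ^ (m/2) / ((m/2).factorial : ℝ) else 0 := by
  rw [e2, pexp, coeff_mk]
  have : ∀ u, coeff m ((C v * X ^ 2 : PowerSeries ℝ) ^ u) = if m = 2 * u then v ^ u else 0 := by
    intro u
    rw [mul_pow, ← pow_mul, ← map_pow, coeff_C_mul, coeff_X_pow]
    split_ifs <;> simp
  simp_rw [this]
  split_ifs with h
  · obtain ⟨k, rfl⟩ := h
    rw [Finset.sum_eq_single k]
    · simp [← two_mul]
    · intro b _ hb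
      rw [if_neg (by omega)]; simp
    · intro h; simp at h
  · refine Finset.sum_eq_zero fun u _ => ?_
    rw [if_neg]; · simp
    rintro rfl; exact h (by simp)

lemma e2_pos {v : ℝ} (hv : 0 ≤ v) : Pos (e2 v) :=
  pexp_pos ((Pos.C hv).mul (Pos.X.pow 2))

lemma pow_aux {a b z B η : ℝ} (ha : |a| ≤ B) (hb : |b| ≤ B) (hz : |z| ≤ B)
    (h1 : |a - z| ≤ η) (h2 : |b - z| ≤ η) (i k : ℕ) :
    |a ^ i * b ^ k - z ^ (i + k)| ≤ (i + k : ℝ) * B ^ (i + k - 1) * η := by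
  have hB : 0 ≤ B := (abs_nonneg _).trans ha
  have hη : 0 ≤ η := (abs_nonneg _).trans h1
  have key : ∀ (x : ℝ) (i : ℕ), |x| ≤ B → |x - z| ≤ η → |x ^ i - z ^ i| ≤ i * B ^ (i-1) * η := by
    intro x i hx hxz
    refine (abs_pow_sub_pow_le x z i).trans ?_
    calc |x - z| * i * max |x| |z| ^ (i - 1) ≤ η * i * B ^ (i-1) := by
          gcongr; exact max_le hx hz
      _ = _ := by ring
  have e : a ^ i * b ^ k - z ^ (i + k) = (a^i - z^i) * b^k + z^i * (b^k - z^k) := by ring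
  rw [e]
  refine (abs_add_le _ _).trans ?_
  rw [abs_mul, abs_mul, abs_pow, abs_pow]
  have t1 : |a^i - z^i| * |b|^k ≤ (i * B^(i-1) * η) * B^k := by
    gcongr; exact key a i ha h1
  have t2 : |z|^i * |b^k - z^k| ≤ B^i * (k * B^(k-1) * η) := by
    gcongr; exact key b k hb h2
  refine (add_le_add t1 t2).trans (le_of_eq ?_)
  rcases i with _ | i <;> rcases k with _ | k <;> simp
  ring

theorem partA (F b : ℕ → PowerSeries ℝ) (D : PowerSeries ℝ) (δ : ℝ)
    (hF0 : F 0 = 1) (hF : ∀ n, F (n+1) = F n + ∑ l ∈ range (n+1), b l * F (n - l))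
    (hb0 : ∀ l, coeff 0 (b l) = 0) (hb1 : ∀ l, coeff 1 (b l) = 0)
    (hD0 : coeff 0 D = 0)
    (hbD : ∀ k N, ∑ l ∈ range N, |coeff k (b l)| ≤ coeff k D)
    (hδ : ∀ N, ∑ l ∈ range N, |coeff 2 (b l)| * ((l + 1) * coeff 2 D) ≤ δ)
    (n : ℕ) :
    Maj (F n - e2 (coeff 2 (F n)))
      (pexp (C (n:ℝ) * (D + C δ * X ^ 4)) - e2 (n * coeff 2 D)) := by
  set d := coeff 2 D with hd
  set D' := D + C δ * X ^ 4 with hD'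
  have hδ0 : 0 ≤ δ := by simpa using hδ 0
  have hDp : Pos D := fun k => by simpa using hbD k 0
  have hd0 : 0 ≤ d := hDp 2
  have hD'p : Pos D' := hDp.add ((Pos.C hδ0).mul (Pos.X.pow 4))
  have hcD' : constantCoeff D' = 0 := by
    rw [hD', map_add, ← coeff_zero_eq_constantCoeff_apply D, hD0]; simp
  set G : ℕ → PowerSeries ℝ := fun n => pexp (C (n:ℝ) * D') with hG
  have hGs : ∀ n, G (n+1) = G n * pexp D' := by
    intro n
    rw [hG]; simp only
    rw [← pexp_add (by simp [hcD']) hcD']; congr 1; push_cast; rw [map_add]; simp; ring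
  have hG0 : G 0 = 1 := by
    ext m
    simp only [hG]
    rw [coeff_pexp (by simp) (N := m+1) (by omega), Finset.sum_range_succ']
    simp
  have hGp : ∀ n, Pos (G n) := fun n =>
    pexp_pos ((Pos.C (Nat.cast_nonneg n)).mul hD'p)
  have he0 : e2 0 = 1 := by
    ext m
    rw [e2, coeff_pexp (by simp) (N := m+1) (by omega), Finset.sum_range_succ']
    simp
  -- monotonicity of G
  have hGm1 : ∀ n, Pos (G (n+1) - (1 + D') * G n) := by
    intro n
    rw [hGs]
    have : G n * pexp D' - (1 + D') * G n = G n * (pexp D' - 1 - D') := by ring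
    rw [this]
    exact (hGp n).mul (pexp_sub_one_sub hD'p hcD')
  have hGm : ∀ n l, Pos (G n - G (n - l)) := by
    intro n
    induction n with
    | zero => intro l; simp [Pos.zero]
    | succ n ih =>
      intro l
      rcases l with _ | l
      · simp [Pos.zero]
      · rw [Nat.add_sub_add_right]
        have : G (n+1) - G (n-l) = (G (n+1) - (1 + D') * G n) + D' * G n + (G n - G (n-l)) := by ring
        rw [this]
        exact ((hGm1 n).add (hD'p.mul (hGp n))).add (ih l)
  -- sums of b against a fixed majorant
  have hsumb : ∀ N, Pos (D - ∑ l ∈ range N, pabs (b l)) := by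
    intro N m
    rw [map_sub, map_sum]
    have := hbD m N
    simp only [pabs, coeff_mk]; linarith
  have hFG : ∀ n, Maj (F n) (G n) := by
    intro n
    induction n using Nat.strong_induction_on with
    | _ n ih =>
      rcases n with _ | n
      · rw [hF0, hG0]; intro m; rw [coeff_one]; split_ifs <;> norm_num
      · rw [hF]
        have h1 : Maj (∑ l ∈ range (n+1), b l * F (n - l))
            (∑ l ∈ range (n+1), pabs (b l) * G n) :=
          Maj.sum fun l hl => (Maj.pabs _).mul ((ih (n-l) (by omega)).mono (hGm n l))
        refine ((ih n (by omega)).add h1).mono ?_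
        rw [← Finset.sum_mul]
        have : G (n+1) - (G n + (∑ l ∈ range (n+1), pabs (b l)) * G n) =
          (G (n+1) - (1 + D') * G n) + ((D - ∑ l ∈ range (n+1), pabs (b l)) + C δ * X^4) * G n := by
          rw [hD']; ring
        rw [this]
        exact (hGm1 n).add (((hsumb _).add ((Pos.C hδ0).mul (Pos.X.pow 4))).mul (hGp n))
  -- the remainder D - d X^2
  set Dr := D - C d * X ^ 2 with hDr
  have hDrp : Pos Dr := by
    intro m
    rw [hDr, map_sub, coeff_C_mul, coeff_X_pow]
    split_ifs with h
    · subst h; simp [hd]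
    · simpa using hDp m
  have hcDr : constantCoeff (Dr + C δ * X^4) = 0 := by
    rw [hDr, map_add, map_sub, ← coeff_zero_eq_constantCoeff_apply D, hD0]; simp
  have hpD' : pexp D' = e2 d * pexp (Dr + C δ * X^4) := by
    rw [e2, ← pexp_add (by simp) hcDr]; congr 1; rw [hD', hDr]; ring
  set T : ℕ → PowerSeries ℝ := fun n => G n - e2 (n * d) with hT
  have he2s : ∀ n : ℕ, e2 ((n+1 : ℕ) * d) = e2 (n * d) * e2 d := by
    intro n; rw [← e2_add]; congr 1; push_cast; ring
  have he2p : ∀ n : ℕ, Pos (e2 (n * d)) := fun n => e2_pos (by positivity)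
  have hTs : ∀ n, T (n+1) = (1 + C d * X^2) * T n + Dr * G n + C δ * X^4 * e2 ((n+1:ℕ) * d)
      + ((e2 d - 1 - C d * X^2) * T n + (e2 d - 1) * Dr * G n + C δ * X^4 * e2 d * T n
        + e2 d * (pexp (Dr + C δ * X^4) - 1 - (Dr + C δ * X^4)) * G n) := by
    intro n
    simp only [hT]
    rw [hGs, he2s, hpD']; ring
  have he2d1 : Pos (e2 d - 1 - C d * X^2) :=
    pexp_sub_one_sub ((Pos.C hd0).mul (Pos.X.pow 2)) (by simp)
  have he2d2 : Pos (e2 d - 1) := by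
    have : e2 d - 1 = (e2 d - 1 - C d * X^2) + C d * X^2 := by ring
    rw [this]; exact he2d1.add ((Pos.C hd0).mul (Pos.X.pow 2))
  have hTstep : ∀ n, Pos (T n) → Pos (T (n+1) -
      ((1 + C d * X^2) * T n + Dr * G n + C δ * X^4 * e2 ((n+1:ℕ) * d))) := by
    intro n hn
    rw [hTs]
    rw [add_sub_cancel_left]
    refine (((he2d1.mul hn).add ((he2d2.mul hDrp).mul (hGp n))).add ?_).add ?_
    · exact ((((Pos.C hδ0).mul (Pos.X.pow 4)).mul (e2_pos hd0)).mul hn)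
    · refine ((e2_pos hd0).mul ?_).mul (hGp n)
      exact pexp_sub_one_sub (hDrp.add ((Pos.C hδ0).mul (Pos.X.pow 4))) hcDr
  have hTp : ∀ n, Pos (T n) := by
    intro n
    induction n with
    | zero => simp only [hT]; rw [hG0]; simp [he0, Pos.zero]
    | succ n ih =>
      have := (hTstep n ih).add (((Pos.one.add ((Pos.C hd0).mul (Pos.X.pow 2))).mul ih).add
        ((hDrp.mul (hGp n)).add (((Pos.C hδ0).mul (Pos.X.pow 4)).mul (he2p (n+1)))))
      convert this using 1
      ring
  have hTm : ∀ n l, Pos (T n - T (n - l)) := by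
    intro n
    induction n with
    | zero => intro l; simp [Pos.zero]
    | succ n ih =>
      intro l
      rcases l with _ | l
      · simp [Pos.zero]
      · rw [Nat.add_sub_add_right]
        have := ((hTstep n (hTp n)).add ((((Pos.C hd0).mul (Pos.X.pow 2)).mul (hTp n)).add
          ((hDrp.mul (hGp n)).add (((Pos.C hδ0).mul (Pos.X.pow 4)).mul (he2p (n+1)))))).add (ih l)
        convert this using 1
        ring
  -- the second coefficient
  set β : ℕ → ℝ := fun l => coeff 2 (b l) with hβ
  have hF0c : ∀ n, coeff 0 (F n) = 1 := by
    intro n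
    induction n with
    | zero => simp [hF0]
    | succ n ih =>
      rw [hF, map_add, ih, map_sum]
      have h0 : ∀ l ∈ range (n+1), coeff 0 (b l * F (n - l)) = 0 := by
        intro l _
        rw [coeff_mul]
        have h00 : antidiagonal 0 = {((0:ℕ),(0:ℕ))} := by decide
        rw [h00, Finset.sum_singleton, hb0, zero_mul]
      rw [Finset.sum_eq_zero h0, add_zero]
  set v : ℕ → ℝ := fun n => coeff 2 (F n) with hv
  have hvs : ∀ n, v (n+1) = v n + ∑ l ∈ range (n+1), β l := by
    intro n
    simp only [hv]
    rw [hF, map_add, map_sum]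
    congr 1
    refine Finset.sum_congr rfl fun l _ => ?_
    rw [coeff_mul]
    have : antidiagonal 2 = {(0,2),(1,1),(2,0)} := by decide
    rw [this]
    rw [Finset.sum_insert (by decide), Finset.sum_insert (by decide), Finset.sum_singleton,
      hb0, hb1, hF0c, zero_mul, zero_mul, zero_add, zero_add, mul_one]
  have hv0 : v 0 = 0 := by simp [hv, hF0, coeff_one]
  have hvstep : ∀ n, |v (n+1) - v n| ≤ d := by
    intro n
    rw [hvs, add_sub_cancel_left]
    exact (Finset.abs_sum_le_sum_abs _ _).trans (hbD 2 (n+1))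
  have hvlip : ∀ n l : ℕ, |v (n + l) - v n| ≤ l * d := by
    intro n l
    induction l with
    | zero => simp
    | succ l ih =>
      have := hvstep (n + l)
      calc |v (n + (l+1)) - v n| = |(v (n+l+1) - v (n+l)) + (v (n+l) - v n)| := by
            congr 1; rw [← add_assoc]; ring
        _ ≤ d + l * d := (abs_add_le _ _).trans (add_le_add this ih)
        _ = _ := by push_cast; ring
  have hvabs : ∀ n : ℕ, |v n| ≤ n * d := by
    intro n; have := hvlip 0 n; simpa [hv0] using this
  have hZ : ∀ n, Maj (e2 (v (n+1)) - e2 (v n) - ∑ l ∈ range (n+1), C (β l) * X^2 * e2 (v (n-l)))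
      (C δ * X^4 * e2 ((n+1:ℕ) * d)) := by
    intro n m
    have hco : ∀ (x y : ℝ) (j : ℕ), coeff (j + 2) (C x * X^2 * e2 y) = x * coeff j (e2 y) := by
      intro x y j
      rw [mul_assoc, coeff_C_mul, coeff_X_pow_mul]
    rcases m with _ | _ | m
    · simp [mul_assoc, coeff_zero_eq_constantCoeff]
      rw [← coeff_zero_eq_constantCoeff_apply, ← coeff_zero_eq_constantCoeff_apply]
      simp only [coeff_e2]; simp
    · rw [map_sub, map_sub, map_sum]
      have h1 : ∀ l ∈ range (n+1), coeff 1 (C (β l) * X^2 * e2 (v (n-l))) = 0 := by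
        intro l _
        rw [mul_assoc, coeff_C_mul, coeff_X_pow_mul']; simp
      rw [Finset.sum_congr rfl h1, mul_assoc, coeff_C_mul, coeff_X_pow_mul']
      simp [coeff_e2]
    · rw [map_sub, map_sub, map_sum]
      simp_rw [hco]
      rw [mul_assoc, coeff_C_mul, coeff_X_pow_mul']
      simp only [coeff_e2]
      by_cases hm : Even m
      · obtain ⟨j, rfl⟩ := hm
        have e1 : Even (j + j + 1 + 1) := ⟨j+1, by ring⟩
        have e1' : (j + j + 1 + 1)/2 = j + 1 := by omega
        have e2' : (j + j)/2 = j := by omega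
        rw [if_pos e1, if_pos e1, e1', e2']
        simp_rw [if_pos (show Even (j+j) from ⟨j, rfl⟩)]
        rcases j with _ | j
        · simp [hvs]
        · have e3 : Even (j + 1 + (j + 1) + 1 + 1 - 4) := ⟨j, by omega⟩
          have e3' : (j + 1 + (j + 1) + 1 + 1 - 4)/2 = j := by omega
          rw [if_pos (show 4 ≤ j + 1 + (j + 1) + 1 + 1 by omega), if_pos e3, e3']
          set B : ℝ := ((n+1:ℕ):ℝ) * d with hB
          have hle : ∀ k ≤ n+1, |v k| ≤ B := by
            intro k hk
            refine (hvabs k).trans ?_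
            rw [hB]; gcongr
          have hBn : 0 ≤ B := (abs_nonneg _).trans (hle 0 (by omega))
          have hgeom : v (n+1)^(j+2) - v n^(j+2) =
              (∑ i ∈ range (j+2), v (n+1)^i * v n^(j+2-1-i)) * ∑ l ∈ range (n+1), β l := by
            rw [← geom_sum₂_mul, hvs n]; ring
          have hmain : v (n+1)^(j+1+1) / ((j+1+1).factorial : ℝ) - v n^(j+1+1) / ((j+1+1).factorial : ℝ)
              - ∑ l ∈ range (n+1), β l * (v (n-l)^(j+1) / ((j+1).factorial:ℝ)) =
              ∑ l ∈ range (n+1), ∑ i ∈ range (j+2),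
                β l * ((v (n+1)^i * v n^(j+2-1-i) - v (n-l)^(j+1)) / ((j+1+1).factorial : ℝ)) := by
            rw [← sub_div, hgeom, Finset.mul_sum, Finset.sum_div, ← Finset.sum_sub_distrib]
            refine Finset.sum_congr rfl fun l _ => ?_
            rw [← Finset.mul_sum, ← Finset.sum_div, Finset.sum_sub_distrib]
            simp only [sum_const, card_range, nsmul_eq_mul]
            have hfac : ((j+1+1).factorial : ℝ) = (j+2) * (j+1).factorial := by
              rw [Nat.factorial_succ (j+1)]; push_cast; ring
            rw [hfac]
            have : ((j+1).factorial : ℝ) ≠ 0 := by positivity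
            have : (j + 2 : ℝ) ≠ 0 := by positivity
            push_cast
            field_simp
          rw [hmain]
          refine (Finset.abs_sum_le_sum_abs _ _).trans ?_
          have hterm : ∀ l ∈ range (n+1), |∑ i ∈ range (j+2),
                β l * ((v (n+1)^i * v n^(j+2-1-i) - v (n-l)^(j+1)) / ((j+1+1).factorial : ℝ))| ≤
                (|β l| * ((l+1) * d)) * (B^j / (j.factorial:ℝ)) := by
            intro l hl
            have hl' : l ≤ n := by simp at hl; omega
            refine (Finset.abs_sum_le_sum_abs _ _).trans ?_
            have h4 : ∀ i ∈ range (j+2), |β l * ((v (n+1)^i * v n^(j+2-1-i) - v (n-l)^(j+1)) / ((j+1+1).factorial : ℝ))| ≤ |β l| * (((j+1) * B^j * ((l+1)*d)) / ((j+1+1).factorial : ℝ)) := by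
              intro i hi
              have hi' : i ≤ j+1 := by simp at hi; omega
              rw [abs_mul, abs_div, abs_of_pos (show (0:ℝ) < ((j+1+1).factorial : ℝ) by positivity)]
              gcongr
              have h5 := pow_aux (a := v (n+1)) (b := v n) (z := v (n-l)) (B := B) (η := (l+1)*d)
                (hle _ le_rfl) (hle _ (by omega)) (hle _ (by omega)) ?_ ?_ i (j+1-i)
              · rw [show i + (j+1-i) = j+1 by omega] at h5
                have : (i:ℝ) + ((j+1-i : ℕ):ℝ) = j + 1 := by
                  rw [Nat.cast_sub hi']; push_cast; ring
                rw [this] at h5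
                simpa using h5
              · have := hvlip (n-l) (l+1)
                rw [show n - l + (l+1) = n+1 by omega] at this
                simpa using this
              · have := hvlip (n-l) l
                rw [show n - l + l = n by omega] at this
                refine this.trans ?_
                gcongr; linarith
            refine (Finset.sum_le_sum h4).trans (le_of_eq ?_)
            simp only [sum_const, card_range, nsmul_eq_mul]
            have hfac : ((j+1+1).factorial : ℝ) = (j+2) * ((j+1) * j.factorial) := by
              rw [Nat.factorial_succ (j+1), Nat.factorial_succ j]; push_cast; ring
            rw [hfac]
            push_cast
            have : (j + 2 : ℝ) ≠ 0 := by positivity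
            field_simp
          refine (Finset.sum_le_sum hterm).trans ?_
          rw [← Finset.sum_mul]
          gcongr
          exact hδ (n+1)
      · have h1 : ¬ Even (m+1+1) := by
          rw [Nat.even_add_one, Nat.even_add_one]; simpa using hm
        rw [if_neg h1, if_neg h1]
        simp_rw [if_neg hm]
        simp
        split_ifs with h4
        · exact mul_nonneg hδ0 (by positivity)
        all_goals simp
  -- main induction
  have main : ∀ n, Maj (F n - e2 (v n)) (T n) := by
    intro n
    induction n using Nat.strong_induction_on with
    | _ n ih =>
      rcases n with _ | n
      · intro m
        rw [hF0, hv0, he0]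
        simpa using hTp 0 m
      · set br : ℕ → PowerSeries ℝ := fun l => b l - C (β l) * X^2 with hbr
        have hdec : F (n+1) - e2 (v (n+1)) = (F n - e2 (v n)) + (∑ l ∈ range (n+1), br l * F (n-l))
            + (∑ l ∈ range (n+1), C (β l) * X^2 * (F (n-l) - e2 (v (n-l)))) -
            (e2 (v (n+1)) - e2 (v n) - ∑ l ∈ range (n+1), C (β l) * X^2 * e2 (v (n-l))) := by
          rw [hF]
          have : ∑ l ∈ range (n+1), b l * F (n - l) = (∑ l ∈ range (n+1), br l * F (n-l))
            + (∑ l ∈ range (n+1), C (β l) * X^2 * (F (n-l) - e2 (v (n-l)))) +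
            ∑ l ∈ range (n+1), C (β l) * X^2 * e2 (v (n-l)) := by
            rw [← Finset.sum_add_distrib, ← Finset.sum_add_distrib]
            refine Finset.sum_congr rfl fun l _ => ?_
            simp only [hbr]; ring
          rw [this]; ring
        rw [hdec]
        have h1 : Maj (∑ l ∈ range (n+1), br l * F (n-l)) (∑ l ∈ range (n+1), pabs (br l) * G n) :=
          Maj.sum fun l hl => (Maj.pabs _).mul ((hFG (n-l)).mono (hGm n l))
        have h2 : Maj (∑ l ∈ range (n+1), C (β l) * X^2 * (F (n-l) - e2 (v (n-l))))
            (∑ l ∈ range (n+1), C |β l| * X^2 * T n) := by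
          refine Maj.sum fun l hl => Maj.mul ?_ ((ih (n-l) (by omega)).mono (hTm n l))
          intro m
          rw [coeff_C_mul, coeff_C_mul, coeff_X_pow]
          split_ifs <;> simp
        refine ((((ih n (by omega)).add h1).add h2).sub (hZ n)).mono ?_
        have h3 : Pos (Dr - ∑ l ∈ range (n+1), pabs (br l)) := by
          intro m
          rw [map_sub, map_sum]
          simp only [hDr, hbr, pabs, coeff_mk, map_sub, coeff_C_mul, coeff_X_pow]
          by_cases hm : m = 2
          · subst hm; simp [hd, hβ]
          · simp [hm]; exact hbD m (n+1)
        have h4 : Pos ((C d - ∑ l ∈ range (n+1), C |β l|) * X^2 * T n) := by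
          refine (Pos.mul ?_ (Pos.X.pow 2)).mul (hTp n)
          rw [← map_sum, ← map_sub]
          exact Pos.C (sub_nonneg.2 (hbD 2 (n+1)))
        have := ((hTstep n (hTp n)).add (h3.mul (hGp n))).add h4
        convert this using 1
        rw [← Finset.sum_mul, ← Finset.sum_mul, ← Finset.sum_mul]
        ring
  exact main n


lemma coeff_pow_fin (E : PowerSeries ℝ) (u M : ℕ) :
    coeff M (E ^ u) = ∑ k ∈ Finset.univ.filter
      (fun k : Fin u → Fin (M + 1) => ∑ i, (k i : ℕ) = M), ∏ i, coeff (k i : ℕ) E := by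
  have h : E ^ u = ∏ _i ∈ (Finset.univ : Finset (Fin u)), E := by simp
  rw [h, coeff_prod]
  symm
  refine Finset.sum_bij (fun k _ => Finsupp.equivFunOnFinite.symm (fun i => (k i : ℕ))) ?_ ?_ ?_ ?_
  · intro k hk
    simp only [mem_filter, mem_univ, true_and] at hk
    rw [mem_finsuppAntidiag]
    simp [hk]
  · intro k _ k' _ hkk
    have := Finsupp.equivFunOnFinite.symm.injective hkk
    ext i
    exact congrFun this i
  · intro l hl
    rw [mem_finsuppAntidiag] at hl
    refine ⟨fun i => ⟨l i, ?_⟩, ?_, ?_⟩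
    · have : l i ≤ ∑ j, l j := Finset.single_le_sum (f := fun j => l j) (fun _ _ => Nat.zero_le _) (mem_univ i)
      have h1 : ∑ j, l j = M := hl.1
      omega
    · simp only [mem_filter, mem_univ, true_and]
      exact hl.1
    · ext i; simp
  · intro k _
    rfl

theorem partA' (F b : ℕ → PowerSeries ℝ) (D : PowerSeries ℝ) (δ : ℝ)
    (hF0 : F 0 = 1) (hF : ∀ n, F (n+1) = F n + ∑ l ∈ range (n+1), b l * F (n - l))
    (hb0 : ∀ l, coeff 0 (b l) = 0) (hb1 : ∀ l, coeff 1 (b l) = 0)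
    (hD0 : coeff 0 D = 0) (hD1 : coeff 1 D = 0)
    (hbD : ∀ k N, ∑ l ∈ range N, |coeff k (b l)| ≤ coeff k D)
    (hδ : ∀ N, ∑ l ∈ range N, |coeff 2 (b l)| * ((l + 1) * coeff 2 D) ≤ δ)
    (n q : ℕ) (hq : 1 ≤ q) (Dt : ℕ → ℝ)
    (hDt : ∀ k, 2 ≤ k → coeff k D + (if k = 4 then δ else 0) ≤ Dt k) :
    coeff (2*q) (F n) ≤ (coeff 2 (F n)) ^ q / (q.factorial : ℝ) +
      ∑ u ∈ Finset.Icc 1 (q-1), (n:ℝ)^u / (u.factorial : ℝ) *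
        ∑ k ∈ Finset.univ.filter
        (fun k : Fin u → Fin (2 * q + 1) =>
          (∀ i, 2 ≤ (k i : ℕ)) ∧ ∑ i, (k i : ℕ) = 2 * q),
          ∏ i, Dt (k i : ℕ) := by
  have hA := partA F b D δ hF0 hF hb0 hb1 hD0 hbD hδ n (2*q)
  have hA1 := (le_abs_self _).trans hA
  rw [map_sub, map_sub, coeff_e2, coeff_e2, if_pos (by simp), if_pos (by simp),
    show 2 * q / 2 = q by omega] at hA1
  have hδ0 : 0 ≤ δ := by simpa using hδ 0
  have hDp : Pos D := fun k => by simpa using hbD k 0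
  set D' := D + C δ * X ^ 4 with hD'
  have hD'c : ∀ k, coeff k D' = coeff k D + (if k = 4 then δ else 0) := by
    intro k
    rw [hD', map_add, coeff_C_mul, coeff_X_pow]; split_ifs <;> simp
  have hD'p : Pos D' := hDp.add ((Pos.C hδ0).mul (Pos.X.pow 4))
  have hcD' : constantCoeff D' = 0 := by
    rw [← coeff_zero_eq_constantCoeff_apply, hD'c, hD0]; simp
  have hdvd : (X^2 : PowerSeries ℝ) ∣ D' := by
    rw [X_pow_dvd_iff]
    intro m hm
    rw [hD'c]
    interval_cases m
    · simp [hD0]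
    · simp [hD1]
  obtain ⟨E, hE⟩ := hdvd
  have hE0 : coeff 0 E = coeff 2 D := by
    have : coeff 2 D' = coeff 2 D := by rw [hD'c]; simp
    rw [← this, hE]
    have := coeff_X_pow_mul E 2 0
    simpa using this.symm
  have hpow : ∀ u, q < u → coeff (2*q) (D' ^ u) = 0 := by
    intro u hu
    rw [hE, mul_pow, ← pow_mul, coeff_X_pow_mul', if_neg (by omega)]
  have hpowq : coeff (2*q) (D' ^ q) = (coeff 2 D)^q := by
    rw [hE, mul_pow, ← pow_mul]
    have := coeff_X_pow_mul (E^q) (2*q) 0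
    rw [zero_add] at this
    rw [this, ← hE0]
    simp
  have hexp : coeff (2*q) (pexp (C (n:ℝ) * D')) = (n * coeff 2 D)^q / (q.factorial:ℝ) +
      ∑ u ∈ Finset.Icc 1 (q-1), (n:ℝ)^u / (u.factorial : ℝ) * coeff (2*q) (D'^u) := by
    rw [pexp, coeff_mk]
    have ht : ∀ u, coeff (2*q) ((C (n:ℝ) * D')^u) / (u.factorial:ℝ) =
        (n:ℝ)^u / (u.factorial:ℝ) * coeff (2*q) (D'^u) := by
      intro u
      rw [mul_pow, ← map_pow, coeff_C_mul]; ring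
    simp_rw [ht]
    have hq' : (n * coeff 2 D)^q / (q.factorial:ℝ) =
        (n:ℝ)^q / (q.factorial:ℝ) * coeff (2*q) (D'^q) := by
      rw [hpowq, mul_pow]; ring
    rw [hq']
    have hni : q ∉ Finset.Icc 1 (q-1) := by simp; omega
    rw [← Finset.sum_insert (f := fun u => (n:ℝ)^u / (u.factorial:ℝ) * coeff (2*q) (D'^u)) hni]
    symm
    refine Finset.sum_subset ?_ ?_
    · intro u; simp; omega
    · intro u _ hu
      simp at hu
      rcases Nat.eq_zero_or_pos u with rfl | hu0
      · rw [pow_zero (M := PowerSeries ℝ), coeff_one, if_neg (by omega), mul_zero]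
      · rw [hpow u (by omega)]; simp
  rw [hexp] at hA1
  have hle : ∀ u ∈ Finset.Icc 1 (q-1), (n:ℝ)^u / (u.factorial : ℝ) * coeff (2*q) (D'^u) ≤
      (n:ℝ)^u / (u.factorial : ℝ) *
        ∑ k ∈ Finset.univ.filter
        (fun k : Fin u → Fin (2 * q + 1) =>
          (∀ i, 2 ≤ (k i : ℕ)) ∧ ∑ i, (k i : ℕ) = 2 * q),
          ∏ i, Dt (k i : ℕ) := by
    intro u _
    gcongr
    rw [coeff_pow_fin]
    have : ∑ k ∈ Finset.univ.filter (fun k : Fin u → Fin (2*q + 1) => ∑ i, (k i : ℕ) = 2*q),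
        ∏ i, coeff (k i : ℕ) D' = ∑ k ∈ Finset.univ.filter
        (fun k : Fin u → Fin (2 * q + 1) =>
          (∀ i, 2 ≤ (k i : ℕ)) ∧ ∑ i, (k i : ℕ) = 2 * q), ∏ i, coeff (k i : ℕ) D' := by
      symm
      refine Finset.sum_subset ?_ ?_
      · intro k; simp
      · intro k hk hk'
        simp only [mem_filter, mem_univ, true_and] at hk hk'
        have : ∃ i, (k i : ℕ) < 2 := by
          by_contra hcon
          push Not at hcon
          exact hk' ⟨hcon, hk⟩
        obtain ⟨i, hi⟩ := this
        refine Finset.prod_eq_zero (mem_univ i) ?_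
        rw [hD'c]
        have : (k i : ℕ) = 0 ∨ (k i : ℕ) = 1 := by omega
        rcases this with h | h <;> rw [h] <;> simp [hD1]
        rw [← coeff_zero_eq_constantCoeff_apply, hD0]
    rw [this]
    refine Finset.sum_le_sum fun k hk => Finset.prod_le_prod (fun i _ => hD'p _) fun i _ => ?_
    simp only [mem_filter, mem_univ, true_and] at hk
    rw [hD'c]
    exact hDt _ (hk.1 i)
  have := Finset.sum_le_sum hle
  linarith

end RosA

namespace RosB

lemma log_rpow_le {γ β v : ℝ} (hγ : 0 ≤ γ) (hβ : 0 < β) (hv : 1 ≤ v) :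
    Real.log v ^ γ ≤ (γ / (Real.exp 1 * β)) ^ γ * v ^ β := by
  have hv0 : 0 < v := by linarith
  rcases hγ.eq_or_lt with rfl | hγ
  · simp only [Real.rpow_zero, one_mul]
    exact Real.one_le_rpow hv hβ.le
  · have hl := Real.log_nonneg hv
    have h1 : Real.exp 1 * (β / γ * Real.log v) ≤ v ^ (β / γ) := by
      have := Real.add_one_le_exp (β / γ * Real.log v - 1)
      rw [Real.rpow_def_of_pos hv0]
      have e : Real.exp (Real.log v * (β/γ)) = Real.exp 1 * Real.exp (β / γ * Real.log v - 1) := by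
        rw [← Real.exp_add]; congr 1; ring
      rw [e]
      exact mul_le_mul_of_nonneg_left (by linarith) (Real.exp_pos 1).le
    have h2 : Real.log v ≤ γ / (Real.exp 1 * β) * v ^ (β/γ) := by
      have he := Real.exp_pos 1
      rw [div_mul_eq_mul_div, le_div_iff₀ (by positivity)]
      calc Real.log v * (Real.exp 1 * β) = γ * (Real.exp 1 * (β / γ * Real.log v)) := by
            field_simp
        _ ≤ γ * v ^ (β/γ) := by gcongr
    calc Real.log v ^ γ ≤ (γ / (Real.exp 1 * β) * v ^ (β/γ)) ^ γ := by gcongr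
      _ = _ := by
        have he := Real.exp_pos 1
        rw [Real.mul_rpow (by positivity) (by positivity), ← Real.rpow_mul hv0.le,
          div_mul_cancel₀ _ hγ.ne']

lemma pow_le_fact (k : ℕ) : ((k:ℝ) / Real.exp 1) ^ k ≤ (k.factorial : ℝ) := by
  have h := Real.pow_div_factorial_le_exp (k:ℝ) (by positivity) k
  have hf : (0:ℝ) < k.factorial := by exact_mod_cast Nat.factorial_pos k
  rw [div_le_iff₀ hf] at h
  rw [div_pow, ← Real.exp_nat_mul, mul_one, div_le_iff₀ (Real.exp_pos _)]
  linarith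

/-- the constant `h_k` -/
def hk (N γ : ℝ) (k : ℕ) : ℝ := N * (γ / (Real.exp 1 * (1 / (2 * (k:ℝ))))) ^ γ

lemma hk_nonneg {N γ : ℝ} (hN : 0 ≤ N) (hγ : 0 ≤ γ) (k : ℕ) : 0 ≤ hk N γ k := by
  unfold hk; have := Real.exp_pos 1; positivity

lemma hk_eq {N γ : ℝ} (hγ : 0 ≤ γ) (k : ℕ) :
    hk N γ k = N * ((2 * γ) ^ γ * ((k:ℝ) / Real.exp 1) ^ γ) := by
  unfold hk
  have he := Real.exp_pos 1
  rw [← Real.mul_rpow (by positivity) (by positivity)]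
  congr 2
  field_simp

lemma hk_pow {N γ : ℝ} (hN : 0 ≤ N) (hγ : 0 ≤ γ) (k : ℕ) :
    hk N γ k ^ k ≤ (N * (2 * γ) ^ γ) ^ k * (k.factorial : ℝ) ^ γ := by
  have he := Real.exp_pos 1
  rw [hk_eq hγ, ← mul_assoc, mul_pow (N * _)]
  refine mul_le_mul_of_nonneg_left ?_ (by positivity)
  rw [← Real.rpow_natCast (((k:ℝ) / Real.exp 1) ^ γ) k, ← Real.rpow_mul (by positivity), mul_comm γ,
    Real.rpow_mul (by positivity), Real.rpow_natCast]
  exact Real.rpow_le_rpow (by positivity) (pow_le_fact k) hγ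

lemma hk_two {N γ : ℝ} (hN : 0 ≤ N) (hγ : 0 ≤ γ) :
    (hk N γ 2 ^ 2) ^ 2 ≤ (N * (2 * γ) ^ γ) ^ 4 * ((4:ℕ).factorial : ℝ) ^ γ := by
  have he := Real.exp_pos 1
  have h1 : ((2:ℕ) / Real.exp 1 : ℝ) ^ γ ≤ 1 := by
    refine Real.rpow_le_one (by positivity) ?_ hγ
    rw [div_le_one he]
    have := Real.add_one_le_exp (1:ℝ)
    push_cast; linarith
  have h2 : (1:ℝ) ≤ ((4:ℕ).factorial : ℝ) ^ γ :=
    Real.one_le_rpow (by norm_num [Nat.factorial]) hγ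
  rw [← pow_mul, hk_eq hγ, ← mul_assoc, mul_pow (N * _)]
  refine mul_le_mul_of_nonneg_left ?_ (by positivity)
  exact (pow_le_one₀ (by positivity) h1).trans h2

lemma inv_one_sub {ρ β : ℝ} (h0 : 0 < ρ) (h1 : ρ < 1) (hβ : 0 < β) :
    1 / (1 - ρ ^ β) ≤ ρ ^ (-β) * (1 / β * (Real.log (1 / ρ))⁻¹) := by
  have hL : 0 < Real.log (1/ρ) := Real.log_pos (by rw [lt_div_iff₀ h0]; linarith)
  have hr1 : ρ ^ β < 1 := Real.rpow_lt_one h0.le h1 hβ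
  have hr0 : 0 < ρ ^ β := by positivity
  have key : β * Real.log (1/ρ) ≤ ρ ^ (-β) * (1 - ρ ^ β) := by
    have e : ρ ^ (-β) = Real.exp (β * Real.log (1/ρ)) := by
      rw [Real.rpow_def_of_pos h0, one_div, Real.log_inv]; congr 1; ring
    have e2 : ρ ^ (-β) * ρ ^ β = 1 := by rw [← Real.rpow_add h0]; simp
    have := Real.add_one_le_exp (β * Real.log (1/ρ))
    rw [← e] at this
    nlinarith
  rw [div_le_iff₀ (by linarith)]
  have : ρ ^ (-β) * (1 / β * (Real.log (1 / ρ))⁻¹) * (1 - ρ ^ β)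
      = (ρ ^ (-β) * (1 - ρ ^ β)) / (β * Real.log (1/ρ)) := by
    field_simp
  rw [this, le_div_iff₀ (by positivity), one_mul]
  exact key

lemma fact_bound (k : ℕ) (hk : 2 ≤ k) : (2 * (k:ℝ)) ^ (k - 1) ≤ 2 * (k.factorial : ℝ) ^ 2 := by
  by_cases h5 : k ≤ 5
  · interval_cases k <;> norm_num [Nat.factorial]
  · have h5' : 5 ≤ k := by omega
    clear h5 hk
    induction k, h5' using Nat.le_induction with
    | base => norm_num [Nat.factorial]
    | succ k hk ih =>
      have hk0 : (5:ℝ) ≤ k := by exact_mod_cast hk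
      have hkp : (0:ℝ) < k := by linarith
      have e : (1 + 1 / (k:ℝ)) ^ (k - 1) ≤ 3 := by
        calc (1 + 1 / (k:ℝ)) ^ (k - 1) ≤ (1 + 1 / (k:ℝ)) ^ k :=
              pow_le_pow_right₀ (by linarith [show (0:ℝ) ≤ 1 / k by positivity]) (by omega)
          _ ≤ (Real.exp (1 / k)) ^ k := by
              gcongr
              rw [add_comm]; exact Real.add_one_le_exp _
          _ = Real.exp 1 := by rw [← Real.exp_nat_mul]; congr 1; field_simp
          _ ≤ 3 := by linarith [Real.exp_one_lt_d9]
      have e2 : (2 * ((k + 1 : ℕ):ℝ)) ^ (k + 1 - 1)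
          = (2 * (k + 1)) * ((2 * (k:ℝ)) ^ (k - 1) * (1 + 1 / (k:ℝ)) ^ (k - 1)) := by
        rw [← mul_pow, show 2 * (k:ℝ) * (1 + 1 / k) = 2 * (k + 1) by field_simp, ← pow_succ']
        push_cast
        congr 1
        omega
      rw [e2, Nat.factorial_succ]
      push_cast
      calc (2 * ((k:ℝ) + 1)) * ((2 * (k:ℝ)) ^ (k - 1) * (1 + 1 / (k:ℝ)) ^ (k - 1))
          ≤ (2 * ((k:ℝ) + 1)) * ((2 * (k.factorial : ℝ) ^ 2) * 3) := by
            gcongr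
        _ ≤ 2 * (((k:ℝ) + 1) * k.factorial) ^ 2 := by
            have : 0 ≤ (k.factorial : ℝ) ^ 2 * (k + 1) := by positivity
            nlinarith

/-- generic bound for all `k ≥ 2` -/
lemma D_bound {N γ C ρ : ℝ} (hN : 0 ≤ N) (hγ : 0 ≤ γ) (hC : 0 ≤ C) (h0 : 0 < ρ) (h1 : ρ < 1)
    (k : ℕ) (h2 : 2 ≤ k) :
    hk N γ k ^ k * (C / (1 - ρ ^ (1 / (2 * (k:ℝ))))) ^ (k - 1) * (C / 2) ≤
      ((2 * (k:ℝ)) ^ (k - 1) / 2) * ((C * (2 * γ) ^ γ * N) ^ k * (k.factorial : ℝ) ^ γ *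
        ((ρ ^ ((1:ℝ)/2))⁻¹ * (Real.log (1 / ρ))⁻¹ ^ (k - 1))) := by
  have hL : 0 < Real.log (1/ρ) := Real.log_pos (by rw [lt_div_iff₀ h0]; linarith)
  have hk0 : (0:ℝ) < k := by positivity
  have hβ : 0 < 1 / (2 * (k:ℝ)) := by positivity
  have hr1 : ρ ^ (1 / (2 * (k:ℝ))) < 1 := Real.rpow_lt_one h0.le h1 hβ
  have a1 := hk_pow hN hγ k
  have a2 := inv_one_sub h0 h1 hβ
  rw [one_div_one_div] at a2
  have a3 : (C / (1 - ρ ^ (1 / (2 * (k:ℝ))))) ^ (k - 1) ≤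
      C ^ (k - 1) * ((ρ ^ ((1:ℝ)/2))⁻¹ * ((2 * (k:ℝ)) ^ (k-1) * (Real.log (1 / ρ))⁻¹ ^ (k - 1))) := by
    have hpos : 0 < 1 - ρ ^ (1 / (2 * (k:ℝ))) := by linarith
    rw [div_eq_mul_one_div, mul_pow]
    refine mul_le_mul_of_nonneg_left ?_ (by positivity)
    refine (pow_le_pow_left₀ (by positivity) a2 _).trans ?_
    rw [mul_pow, mul_pow]
    refine mul_le_mul_of_nonneg_right ?_ (by positivity)
    rw [← Real.rpow_natCast, ← Real.rpow_mul h0.le, ← Real.rpow_neg h0.le]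
    refine Real.rpow_le_rpow_of_exponent_ge h0 h1.le ?_
    have : ((k - 1 : ℕ) : ℝ) ≤ k := by exact_mod_cast Nat.sub_le k 1
    rw [neg_mul, neg_le_neg_iff, div_mul_eq_mul_div, one_mul, div_le_div_iff₀ (by positivity) two_pos]
    linarith
  have hf : (0:ℝ) ≤ (k.factorial : ℝ) ^ γ := by positivity
  calc hk N γ k ^ k * (C / (1 - ρ ^ (1 / (2 * (k:ℝ))))) ^ (k - 1) * (C / 2)
      ≤ ((N * (2 * γ) ^ γ) ^ k * (k.factorial : ℝ) ^ γ) * (C ^ (k - 1) * ((ρ ^ ((1:ℝ)/2))⁻¹ *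
        ((2 * (k:ℝ)) ^ (k-1) * (Real.log (1 / ρ))⁻¹ ^ (k - 1)))) * (C / 2) := by
        have hpos : 0 < 1 - ρ ^ (1 / (2 * (k:ℝ))) := by linarith
        gcongr
    _ = _ := by
        rw [show C * (2 * γ) ^ γ * N = C * (N * (2 * γ) ^ γ) by ring, mul_pow C]
        obtain ⟨m, rfl⟩ : ∃ m, k = m + 1 := ⟨k - 1, by omega⟩
        simp only [Nat.add_sub_cancel, pow_succ C]
        ring

lemma sum_geo {s : ℝ} (h0 : 0 ≤ s) (h1 : s < 1) (N : ℕ) :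
    ∑ l ∈ range N, ((l:ℝ) + 1) * s ^ l ≤ (1 / (1 - s)) ^ 2 := by
  have e : ∀ N : ℕ, (∑ l ∈ range N, ((l:ℝ) + 1) * s ^ l) * (1 - s) ^ 2
      = 1 - (N + 1) * s ^ N + N * s ^ (N + 1) := by
    intro N
    induction N with
    | zero => simp
    | succ N ih => rw [Finset.sum_range_succ, add_mul, ih]; push_cast; ring
  have hp : 0 < 1 - s := by linarith
  rw [one_div, inv_pow, ← one_div, le_div_iff₀ (by positivity), e N, pow_succ]
  have : 0 ≤ s ^ N := by positivity
  nlinarith [mul_nonneg (Nat.cast_nonneg (α := ℝ) N) this]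

/-- `K` -/
def Kc (N γ C : ℝ) : ℝ := hk N γ 2 ^ 2 * C * (C / 2)

lemma K_bound {N γ C ρ : ℝ} (hN : 0 ≤ N) (hγ : 0 ≤ γ) (hC : 0 ≤ C) (h0 : 0 < ρ) (h1 : ρ < 1) :
    Kc N γ C * (1 / (1 - ρ ^ ((1:ℝ)/6))) ≤ 
      4 * ((C * (2 * γ) ^ γ * N) ^ 2 * ((2:ℕ).factorial : ℝ) ^ γ *
        ((ρ ^ ((1:ℝ)/2))⁻¹ * (Real.log (1 / ρ))⁻¹)) := by
  have hL : 0 < Real.log (1/ρ) := Real.log_pos (by rw [lt_div_iff₀ h0]; linarith)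
  have a1 := hk_pow hN hγ 2
  have a2 := inv_one_sub h0 h1 (show (0:ℝ) < 1/6 by norm_num)
  have a3 : ρ ^ (-((1:ℝ)/6)) ≤ (ρ ^ ((1:ℝ)/2))⁻¹ := by
    rw [← Real.rpow_neg h0.le]
    exact Real.rpow_le_rpow_of_exponent_ge h0 h1.le (by norm_num)
  have hr1 : ρ ^ ((1:ℝ)/6) < 1 := Real.rpow_lt_one h0.le h1 (by norm_num)
  have hpos : 0 < 1 - ρ ^ ((1:ℝ)/6) := by linarith
  unfold Kc
  calc hk N γ 2 ^ 2 * C * (C / 2) * (1 / (1 - ρ ^ ((1:ℝ)/6)))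
      ≤ ((N * (2 * γ) ^ γ) ^ 2 * ((2:ℕ).factorial : ℝ) ^ γ) * C * (C / 2) *
        ((ρ ^ ((1:ℝ)/2))⁻¹ * (1 / (1/6) * (Real.log (1 / ρ))⁻¹)) := by
        refine mul_le_mul (by gcongr) (a2.trans ?_) (by positivity) (by positivity)
        gcongr
    _ = 3 * ((C * (2 * γ) ^ γ * N) ^ 2 * ((2:ℕ).factorial : ℝ) ^ γ *
        ((ρ ^ ((1:ℝ)/2))⁻¹ * (Real.log (1 / ρ))⁻¹)) := by ring
    _ ≤ _ := by
        refine mul_le_mul_of_nonneg_right (by norm_num) (by positivity)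

lemma delta_bound {N γ C ρ : ℝ} (hN : 0 ≤ N) (hγ : 0 ≤ γ) (hC : 0 ≤ C) (h0 : 0 < ρ) (h1 : ρ < 1) :
    Kc N γ C ^ 2 * (1 / (1 - ρ ^ ((1:ℝ)/6))) ^ 3 ≤ 
      54 * ((C * (2 * γ) ^ γ * N) ^ 4 * ((4:ℕ).factorial : ℝ) ^ γ *
        ((ρ ^ ((1:ℝ)/2))⁻¹ * (Real.log (1 / ρ))⁻¹ ^ 3)) := by
  have hL : 0 < Real.log (1/ρ) := Real.log_pos (by rw [lt_div_iff₀ h0]; linarith)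
  have a1 := hk_two hN hγ
  have a2 := inv_one_sub h0 h1 (show (0:ℝ) < 1/6 by norm_num)
  have a3 : (ρ ^ (-((1:ℝ)/6))) ^ 3 = (ρ ^ ((1:ℝ)/2))⁻¹ := by
    rw [← Real.rpow_neg h0.le, ← Real.rpow_natCast, ← Real.rpow_mul h0.le]
    norm_num
  have hr1 : ρ ^ ((1:ℝ)/6) < 1 := Real.rpow_lt_one h0.le h1 (by norm_num)
  have hpos : 0 < 1 - ρ ^ ((1:ℝ)/6) := by linarith
  have e : Kc N γ C ^ 2 = (hk N γ 2 ^ 2) ^ 2 * (C ^ 4 / 4) := by unfold Kc; ring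
  rw [e]
  calc (hk N γ 2 ^ 2) ^ 2 * (C ^ 4 / 4) * (1 / (1 - ρ ^ ((1:ℝ)/6))) ^ 3
      ≤ ((N * (2 * γ) ^ γ) ^ 4 * ((4:ℕ).factorial : ℝ) ^ γ) * (C ^ 4 / 4) *
        (ρ ^ (-((1:ℝ)/6)) * (1 / (1/6) * (Real.log (1 / ρ))⁻¹)) ^ 3 := by
        gcongr
    _ = 54 * ((C * (2 * γ) ^ γ * N) ^ 4 * ((4:ℕ).factorial : ℝ) ^ γ *
        ((ρ ^ (-((1:ℝ)/6))) ^ 3 * (Real.log (1 / ρ))⁻¹ ^ 3)) := by ring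
    _ = _ := by rw [a3]

end RosB

namespace RosC

variable {X : Type*} [MeasurableSpace X]

lemma integral_sub_eq (ν π : Measure X) [IsFiniteMeasure ν] [IsFiniteMeasure π]
    (f : X → ℝ) (h1 : Integrable f ν) (h2 : Integrable f π) :
    ∫ x, f x ∂ν - ∫ x, f x ∂π = ∫ x, f x ∂(ν - π) - ∫ x, f x ∂(π - ν) := by
  have h := Measure.sub_toSignedMeasure_eq_toSignedMeasure_sub (μ := ν) (ν := π)
  have h' : ν.toSignedMeasure + (π - ν).toSignedMeasure
      = π.toSignedMeasure + (ν - π).toSignedMeasure := by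
    rw [sub_eq_sub_iff_add_eq_add] at h
    rw [h, add_comm]
  rw [← Measure.toSignedMeasure_add, ← Measure.toSignedMeasure_add, Measure.toSignedMeasure_eq_toSignedMeasure_iff]
    at h'
  have e1 := integral_add_measure h1 (h2.mono_measure (Measure.sub_le (μ := π) (ν := ν)))
  have e2 := integral_add_measure h2 (h1.mono_measure (Measure.sub_le (μ := ν) (ν := π)))
  rw [h', e2] at e1
  linarith

lemma amgm {a v α : ℝ} (ha : 0 < a) (hv : 0 ≤ v) (h0 : 0 < α) (h1 : α ≤ 1) :
    v ^ α ≤ a ^ α * (α * (v / a) + (1 - α)) := by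
  have h := Real.geom_mean_le_arith_mean2_weighted h0.le (sub_nonneg.2 h1)
    (div_nonneg hv ha.le) zero_le_one (by ring)
  rw [Real.one_rpow, mul_one, mul_one, Real.div_rpow hv ha.le, div_le_iff₀ (by positivity)] at h
  linarith

lemma int_rpow {V : X → ℝ} (hV : Measurable V) (hV1 : ∀ x, 1 ≤ V x) (μ : Measure X)
    (h : Integrable V μ) {α : ℝ} (h1 : α ≤ 1) :
    Integrable (fun x => V x ^ α) μ := by
  refine h.mono (hV.pow_const α).aestronglyMeasurable (ae_of_all _ fun x => ?_)
  have := hV1 x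
  rw [Real.norm_of_nonneg (by positivity), Real.norm_of_nonneg (by positivity)]
  calc V x ^ α ≤ V x ^ (1:ℝ) := Real.rpow_le_rpow_of_exponent_le this h1
    _ = _ := Real.rpow_one _

lemma int_of_bd {V f : X → ℝ} (hV : Measurable V) (hV1 : ∀ x, 1 ≤ V x) (μ : Measure X)
    (h : Integrable V μ) {α t : ℝ} (h1 : α ≤ 1) (hf : Measurable f)
    (hb : ∀ᵐ x ∂μ, |f x| ≤ t * V x ^ α) : Integrable f μ :=
  ((int_rpow hV hV1 μ h h1).const_mul t).mono' hf.aestronglyMeasurable hb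

lemma wtv_bound (ν π : Measure X) [IsProbabilityMeasure ν] [IsProbabilityMeasure π]
    {V f : X → ℝ} (hV : Measurable V) (hV1 : ∀ x, 1 ≤ V x) (hVν : Integrable V ν)
    (hVπ : Integrable V π) (hf : Measurable f) {α t M : ℝ} (h0 : 0 < α) (h1 : α ≤ 1)
    (ht : 0 ≤ t) (hbν : ∀ᵐ x ∂ν, |f x| ≤ t * V x ^ α) (hbπ : ∀ᵐ x ∂π, |f x| ≤ t * V x ^ α)
    (hM0 : 0 < M) (hM : (∫ x, V x ∂(ν - π)) + ∫ x, V x ∂(π - ν) ≤ M) :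
    |∫ x, f x ∂ν - ∫ x, f x ∂π| ≤ t * (2 * (M / 2) ^ α) := by
  have key : ∀ μ μ' : Measure X, IsProbabilityMeasure μ → μ' ≤ μ → Integrable V μ →
      (∀ᵐ x ∂μ, |f x| ≤ t * V x ^ α) →
      |∫ x, f x ∂μ'| ≤ t * ((M/2)^α * (α * ((∫ x, V x ∂μ') / (M/2)) + (1 - α))) := by
    intro μ μ' _ hle hVi hb
    have hfin : IsFiniteMeasure μ' := isFiniteMeasure_of_le μ hle
    have hVi' := hVi.mono_measure hle
    have hb' : ∀ᵐ x ∂μ', |f x| ≤ t * V x ^ α := ae_mono hle hb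
    have hmass : μ'.real Set.univ ≤ 1 := by
      have : μ' Set.univ ≤ 1 := (hle Set.univ).trans_eq measure_univ
      exact ENNReal.toReal_le_of_le_ofReal zero_le_one (by simpa using this)
    have hfi := int_of_bd hV hV1 μ' hVi' h1 hf hb'
    have hInt0 : Integrable (fun x => t * ((M/2)^α * (α * (V x / (M/2)) + (1 - α)))) μ' := by
      refine Integrable.const_mul (Integrable.const_mul (Integrable.add ?_ ?_) _) _
      · exact (hVi'.div_const _).const_mul _
      · exact integrable_const _
    calc |∫ x, f x ∂μ'| ≤ ∫ x, |f x| ∂μ' := abs_integral_le_integral_abs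
      _ ≤ ∫ x, t * ((M/2)^α * (α * (V x / (M/2)) + (1 - α))) ∂μ' := by
          refine integral_mono_ae hfi.abs hInt0 ?_
          filter_upwards [hb'] with x hx
          refine hx.trans (mul_le_mul_of_nonneg_left ?_ ht)
          exact amgm (by positivity) (by linarith [hV1 x]) h0 h1
      _ = t * ((M/2)^α * (α * ((∫ x, V x ∂μ') / (M/2)) + (1 - α) * μ'.real Set.univ)) := by
          rw [integral_const_mul, integral_const_mul, integral_add, integral_const_mul,
            integral_div, integral_const, smul_eq_mul, mul_comm (μ'.real _)]
          · exact (hVi'.div_const _).const_mul _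
          · exact integrable_const _
      _ ≤ _ := by
          gcongr
          nlinarith
  have k1 := key ν (ν - π) inferInstance Measure.sub_le hVν hbν
  have k2 := key π (π - ν) inferInstance Measure.sub_le hVπ hbπ
  rw [integral_sub_eq ν π f (int_of_bd hV hV1 ν hVν h1 hf hbν) (int_of_bd hV hV1 π hVπ h1 hf hbπ)]
  refine (abs_sub _ _).trans ((add_le_add k1 k2).trans ?_)
  rw [← mul_add, ← mul_add]
  refine mul_le_mul_of_nonneg_left ?_ ht
  rw [mul_comm (2:ℝ)]
  refine mul_le_mul_of_nonneg_left ?_ (by positivity)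
  have : ((∫ x, V x ∂(ν - π)) + ∫ x, V x ∂(π - ν)) / (M/2) ≤ 2 := by
    rw [div_le_iff₀ (by positivity)]; linarith
  rw [add_div] at this
  nlinarith


/-- The standing hypotheses. -/
structure Hyp (Q : Kernel X X) (V : X → ℝ) (c ρ : ℝ) (π : Measure X) : Prop where
  mker : IsMarkovKernel Q
  pr : IsProbabilityMeasure π
  hV : Measurable V
  hV1 : ∀ x, 1 ≤ V x
  inv : π.bind (fun x => Q x) = π
  int : Integrable V π
  hc : 1 ≤ c
  hρ0 : 0 < ρ
  hρ1 : ρ < 1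
  erg : ∀ ξ : Measure X, IsProbabilityMeasure ξ → Integrable V ξ → ∀ k : ℕ,
      wTV V (ξ.bind (fun x => (kIter Q k) x)) π ≤
        c * ((∫ x, V x ∂ξ) + ∫ x, V x ∂π) * ρ ^ k

lemma kIter_markov (Q : Kernel X X) [IsMarkovKernel Q] (j : ℕ) : IsMarkovKernel (kIter Q j) := by
  induction j with
  | zero => simp only [kIter]; infer_instance
  | succ j ih => simp only [kIter]; infer_instance

lemma kIter_inv (Q : Kernel X X) [IsMarkovKernel Q] (π : Measure X)
    (h : π.bind (fun x => Q x) = π) (j : ℕ) : π.bind (kIter Q j) = π := by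
  induction j with
  | zero => simp [kIter]
  | succ j ih =>
    simp only [kIter]
    rw [← Measure.comp_assoc]
    exact (congrArg (fun μ : Measure X => μ.bind (kIter Q j)) h).trans ih

/-- centered transition operator -/
def Rj (Q : Kernel X X) (π : Measure X) (j : ℕ) (f : X → ℝ) (x : X) : ℝ :=
  ∫ y, f y ∂(kIter Q j x) - ∫ y, f y ∂π

def Rop (Q : Kernel X X) (π : Measure X) (f : X → ℝ) (x : X) : ℝ :=
  ∫ y, f y ∂(Q x) - ∫ y, f y ∂π

variable {Q : Kernel X X} {V : X → ℝ} {c ρ : ℝ} {π : Measure X}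

lemma Rj_one (f : X → ℝ) : Rj Q π 1 f = Rop Q π f := by
  funext x
  simp [Rj, Rop, kIter]

lemma Rj_meas (H : Hyp Q V c ρ π) (j : ℕ) {f : X → ℝ} (hf : Measurable f) :
    Measurable (Rj Q π j f) := by
  have := H.mker
  have := kIter_markov Q j
  exact (hf.stronglyMeasurable.integral_kernel (κ := kIter Q j)).measurable.sub_const _

lemma ae_int (H : Hyp Q V c ρ π) (j : ℕ) {f : X → ℝ} (hf : Integrable f π) :
    ∀ᵐ x ∂π, Integrable f (kIter Q j x) := by
  have := H.mker
  have := H.pr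
  have := kIter_markov Q j
  have h2 : Integrable f (π.bind (kIter Q j)) := by rwa [kIter_inv Q π H.inv j]
  exact Measure.ae_integrable_of_integrable_comp h2

lemma ae_ae (H : Hyp Q V c ρ π) (j : ℕ) {p : X → Prop} (hf : ∀ᵐ x ∂π, p x) :
    ∀ᵐ x ∂π, ∀ᵐ y ∂(kIter Q j x), p y := by
  have := H.mker
  have := H.pr
  have := kIter_markov Q j
  have h2 : ∀ᵐ x ∂(π.bind (kIter Q j)), p x := by rwa [kIter_inv Q π H.inv j]
  exact Measure.ae_ae_of_ae_comp h2

lemma one_le_piV (H : Hyp Q V c ρ π) : 1 ≤ ∫ x, V x ∂π := by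
  have := H.pr
  have h := integral_mono (μ := π) (integrable_const (1:ℝ)) H.int (fun x => H.hV1 x)
  simpa using h

lemma R_bound (H : Hyp Q V c ρ π) (j : ℕ) {f : X → ℝ} (hf : Measurable f) {t α : ℝ}
    (ht : 0 ≤ t) (h0 : 0 < α) (h1 : α ≤ 1) (hb : ∀ᵐ x ∂π, |f x| ≤ t * V x ^ α) :
    ∀ᵐ x ∂π, |Rj Q π j f x| ≤ t * ((2 * c * ∫ x, V x ∂π) * (ρ ^ α) ^ j) * V x ^ α := by
  have := H.mker
  have := H.pr
  have := kIter_markov Q j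
  filter_upwards [ae_ae H j hb, ae_int H j H.int] with x hx1 hx2
  have hpV := one_le_piV H
  have hc := H.hc
  have hρ0 := H.hρ0
  have hVx := H.hV1 x
  have herg := H.erg (Measure.dirac x) inferInstance (by
    exact (integrable_dirac' H.hV.stronglyMeasurable (by simp [enorm_lt_top]))) j
  rw [integral_dirac' _ _ H.hV.stronglyMeasurable, Measure.dirac_bind (kIter Q j).measurable] at herg
  set p := ∫ x, V x ∂π with hp
  have hM0 : 0 < c * (V x + p) * ρ ^ j := by positivity
  have h := wtv_bound (kIter Q j x) π H.hV H.hV1 hx2 H.int hf h0 h1 ht hx1 hb hM0 herg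
  refine h.trans ?_
  rw [mul_assoc t]
  refine mul_le_mul_of_nonneg_left ?_ ht
  have hle : c * (V x + p) * ρ ^ j / 2 ≤ (c * p) * ρ ^ j * V x := by
    have : V x + p ≤ 2 * (p * V x) := by nlinarith
    have h3 : 0 ≤ c * ρ ^ j := by positivity
    nlinarith [mul_le_mul_of_nonneg_left this h3]
  have hcp : 1 ≤ c * p := by nlinarith
  calc 2 * (c * (V x + p) * ρ ^ j / 2) ^ α ≤ 2 * ((c * p) * ρ ^ j * V x) ^ α := by
        gcongr
    _ = 2 * ((c * p) ^ α * (ρ ^ α) ^ j * V x ^ α) := by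
        rw [Real.mul_rpow (by positivity) (by positivity), Real.mul_rpow (by positivity) (by positivity),
          ← Real.rpow_natCast ρ j, ← Real.rpow_mul hρ0.le, ← Real.rpow_natCast (ρ ^ α) j,
          ← Real.rpow_mul hρ0.le, mul_comm α]
    _ ≤ 2 * ((c * p) ^ (1:ℝ) * (ρ ^ α) ^ j * V x ^ α) := by
        gcongr
    _ = _ := by rw [Real.rpow_one]; ring

/-- functions dominated by every positive power of `V`. -/
structure Nice (V : X → ℝ) (π : Measure X) (f : X → ℝ) : Prop where
  meas : Measurable f
  bd : ∀ α : ℝ, 0 < α → α ≤ 1 → ∃ t : ℝ, 0 ≤ t ∧ ∀ᵐ x ∂π, |f x| ≤ t * V x ^ α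

lemma Nice.integrable (H : Hyp Q V c ρ π) {f : X → ℝ} (hf : Nice V π f) : Integrable f π := by
  obtain ⟨t, -, h⟩ := hf.bd 1 one_pos le_rfl
  exact int_of_bd H.hV H.hV1 π H.int le_rfl hf.meas h

lemma Nice.const (H : Hyp Q V c ρ π) (a : ℝ) : Nice V π (fun _ => a) :=
  ⟨measurable_const, fun _ h0 _ => ⟨|a|, abs_nonneg _, ae_of_all _ fun x =>
    le_mul_of_one_le_right (abs_nonneg _) (Real.one_le_rpow (H.hV1 x) h0.le)⟩⟩

lemma Nice.add {f g : X → ℝ} (hf : Nice V π f) (hg : Nice V π g) :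
    Nice V π (fun x => f x + g x) := by
  refine ⟨hf.meas.add hg.meas, fun α h0 h1 => ?_⟩
  obtain ⟨t, ht, h⟩ := hf.bd α h0 h1
  obtain ⟨s, hs, h'⟩ := hg.bd α h0 h1
  refine ⟨t + s, by positivity, ?_⟩
  filter_upwards [h, h'] with x a b
  rw [add_mul]
  exact (abs_add_le _ _).trans (add_le_add a b)

lemma Nice.mul (H : Hyp Q V c ρ π) {f g : X → ℝ} (hf : Nice V π f) (hg : Nice V π g) :
    Nice V π (fun x => f x * g x) := by
  refine ⟨hf.meas.mul hg.meas, fun α h0 h1 => ?_⟩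
  obtain ⟨t, ht, h⟩ := hf.bd (α/2) (by positivity) (by linarith)
  obtain ⟨s, hs, h'⟩ := hg.bd (α/2) (by positivity) (by linarith)
  refine ⟨t * s, by positivity, ?_⟩
  filter_upwards [h, h'] with x a b
  rw [abs_mul]
  have hVx : 0 < V x := by linarith [H.hV1 x]
  calc |f x| * |g x| ≤ (t * V x ^ (α/2)) * (s * V x ^ (α/2)) :=
        mul_le_mul a b (abs_nonneg _) (by positivity)
    _ = t * s * (V x ^ (α/2) * V x ^ (α/2)) := by ring
    _ = _ := by rw [← Real.rpow_add hVx]; norm_num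

lemma Nice.sum (H : Hyp Q V c ρ π) {ι : Type*} (s : Finset ι) {f : ι → X → ℝ}
    (hf : ∀ i ∈ s, Nice V π (f i)) :
    Nice V π (fun x => ∑ i ∈ s, f i x) := by
  induction s using Finset.induction_on with
  | empty => simpa using Nice.const H 0
  | insert a s ha ih =>
    simp only [Finset.sum_insert ha]
    exact (hf a (by simp)).add (ih fun i hi => hf i (by simp [hi]))

lemma Nice.pow (H : Hyp Q V c ρ π) {f : X → ℝ} (hf : Nice V π f) (k : ℕ) :
    Nice V π (fun x => f x ^ k) := by
  induction k with
  | zero => simpa using Nice.const H 1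
  | succ k ih => simp only [pow_succ]; exact ih.mul H hf

lemma Nice.powdiv (H : Hyp Q V c ρ π) {f : X → ℝ} (hf : Nice V π f) (k : ℕ) (a : ℝ) :
    Nice V π (fun x => f x ^ k / a) := by
  simp only [div_eq_mul_inv]
  exact (hf.pow H k).mul H (Nice.const H _)

lemma Nice.Rj (H : Hyp Q V c ρ π) {f : X → ℝ} (hf : Nice V π f) (j : ℕ) :
    Nice V π (Rj Q π j f) := by
  refine ⟨Rj_meas H j hf.meas, fun α h0 h1 => ?_⟩
  obtain ⟨t, ht, h⟩ := hf.bd α h0 h1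
  have := one_le_piV H
  have := H.hc
  have := H.hρ0
  exact ⟨_, by positivity, R_bound H j hf.meas ht h0 h1 h⟩

lemma Nice.Rop (H : Hyp Q V c ρ π) {f : X → ℝ} (hf : Nice V π f) :
    Nice V π (Rop Q π f) := by
  rw [← Rj_one]; exact hf.Rj H 1

lemma pi_Rj (H : Hyp Q V c ρ π) {f : X → ℝ} (hf : Nice V π f) (j : ℕ) :
    ∫ x, RosC.Rj Q π j f x ∂π = 0 := by
  have := H.mker
  have := H.pr
  have := kIter_markov Q j
  have hi := hf.integrable H
  have h2 : Integrable f (π.bind (kIter Q j)) := by rwa [kIter_inv Q π H.inv j]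
  have h3 : ∫ x, f x ∂(π.bind (kIter Q j)) = ∫ x, ∫ y, f y ∂(kIter Q j x) ∂π := by
    rw [Measure.comp_eq_comp_const_apply] at h2 ⊢
    rw [Kernel.integral_comp h2]; rfl
  rw [kIter_inv Q π H.inv j] at h3
  unfold RosC.Rj
  rw [integral_sub _ (integrable_const _), ← h3]
  · simp
  · have := ((hf.Rj H j).integrable H).add (integrable_const (∫ y, f y ∂π))
    refine this.congr (ae_of_all _ fun x => ?_)
    simp [RosC.Rj]

lemma pi_Rop (H : Hyp Q V c ρ π) {f : X → ℝ} (hf : Nice V π f) :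
    ∫ x, RosC.Rop Q π f x ∂π = 0 := by
  rw [← Rj_one]; exact pi_Rj H hf 1

lemma Rop_congr (H : Hyp Q V c ρ π) {f g : X → ℝ} (h : f =ᵐ[π] g) :
    Rop Q π f =ᵐ[π] Rop Q π g := by
  rw [← Rj_one, ← Rj_one]
  filter_upwards [ae_ae H 1 h] with x hx
  simp only [Rj]
  rw [integral_congr_ae hx, integral_congr_ae h]

lemma Rop_add (H : Hyp Q V c ρ π) {f g : X → ℝ} (hf : Nice V π f) (hg : Nice V π g) :
    Rop Q π (fun x => f x + g x) =ᵐ[π] fun x => Rop Q π f x + Rop Q π g x := by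
  have h1 := ae_int H 1 (hf.integrable H)
  have h2 := ae_int H 1 (hg.integrable H)
  rw [← Rj_one, ← Rj_one, ← Rj_one]
  filter_upwards [h1, h2] with x hx1 hx2
  simp only [Rj]
  rw [integral_add hx1 hx2, integral_add (hf.integrable H) (hg.integrable H)]
  ring

lemma Rop_sum (H : Hyp Q V c ρ π) {ι : Type*} (s : Finset ι) {f : ι → X → ℝ}
    (hf : ∀ i ∈ s, Nice V π (f i)) :
    Rop Q π (fun x => ∑ i ∈ s, f i x) =ᵐ[π] fun x => ∑ i ∈ s, Rop Q π (f i) x := by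
  have h1 : ∀ i ∈ s, ∀ᵐ x ∂π, Integrable (f i) (kIter Q 1 x) :=
    fun i hi => ae_int H 1 ((hf i hi).integrable H)
  have h1' := (Filter.eventually_all_finset s).2 h1
  simp only [← Rj_one]
  filter_upwards [h1'] with x hx
  simp only [Rj]
  rw [integral_finsetSum s hx, integral_finsetSum s fun i hi => (hf i hi).integrable H,
    Finset.sum_sub_distrib]

lemma Rop_Rj (H : Hyp Q V c ρ π) {f : X → ℝ} (hf : Nice V π f) (j : ℕ) :
    Rop Q π (Rj Q π j f) =ᵐ[π] Rj Q π (j+1) f := by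
  have := H.mker
  have := H.pr
  have := kIter_markov Q j
  have hi := ae_int H (j+1) (hf.integrable H)
  have h1 := ae_int H 1 ((hf.Rj H j).integrable H)
  filter_upwards [hi, h1] with x hx hx1
  have e : kIter Q 1 x = Q x := by simp [kIter]
  rw [e] at hx1
  have hx' : Integrable f ((kIter Q j ∘ₖ Q) x) := hx
  have h3 := Kernel.integral_comp hx'
  have h4 : Rj Q π (j+1) f x = ∫ y, ∫ z, f z ∂(kIter Q j y) ∂(Q x) - ∫ y, f y ∂π := by
    unfold Rj; rw [← h3]; rfl
  rw [h4]
  unfold Rop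
  rw [pi_Rj H hf j, sub_zero]
  unfold Rj
  rw [integral_sub _ (integrable_const _)]
  · simp
  · have := hx1.add (integrable_const (∫ y, f y ∂π))
    refine this.congr (ae_of_all _ fun x => ?_)
    simp [RosC.Rj]


def psi (Q : Kernel X X) (π : Measure X) (Y : X → ℝ) : ℕ → ℕ → X → ℝ
  | 0, k => fun x => Y x ^ k / (k.factorial : ℝ)
  | l + 1, k => fun x => ∑ p ∈ antidiagonal k,
      Y x ^ p.1 / (p.1.factorial : ℝ) * Rop Q π (psi Q π Y l p.2) x

def theta (Q : Kernel X X) (π : Measure X) (Y : X → ℝ) : ℕ → ℕ → X → ℝ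
  | 0, k => fun x => Y x ^ k / (k.factorial : ℝ)
  | l + 1, k => fun x => ∑ i ∈ range k,
      Y x ^ (i + 1) / ((i + 1).factorial : ℝ) * Rop Q π (psi Q π Y l (k - (i + 1))) x

variable {Y : X → ℝ}

lemma psi_nice (H : Hyp Q V c ρ π) (hY : Nice V π Y) (l k : ℕ) : Nice V π (psi Q π Y l k) := by
  induction l generalizing k with
  | zero => exact hY.powdiv H k _
  | succ l ih =>
    exact Nice.sum H _ fun p _ => (hY.powdiv H _ _).mul H ((ih p.2).Rop H)

lemma theta_nice (H : Hyp Q V c ρ π) (hY : Nice V π Y) (l k : ℕ) :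
    Nice V π (theta Q π Y l k) := by
  cases l with
  | zero => exact hY.powdiv H k _
  | succ l =>
    exact Nice.sum H _ fun p _ => (hY.powdiv H _ _).mul H ((psi_nice H hY l _).Rop H)

lemma psi_succ_eq (l k : ℕ) (x : X) : psi Q π Y (l+1) k x
    = theta Q π Y (l+1) k x + Rop Q π (psi Q π Y l k) x := by
  simp only [psi, theta]
  rw [Finset.Nat.sum_antidiagonal_eq_sum_range_succ
    (fun i j => Y x ^ i / (i.factorial : ℝ) * Rop Q π (psi Q π Y l j) x), Nat.succ_eq_add_one,
    Finset.sum_range_succ']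
  simp

lemma Rop_const (H : Hyp Q V c ρ π) (a : ℝ) : Rop Q π (fun _ => a) = fun _ => 0 := by
  have := H.mker
  have := H.pr
  funext x; simp [Rop]

lemma psi_zero_right (H : Hyp Q V c ρ π) (l : ℕ) :
    psi Q π Y l 0 = fun _ => if l = 0 then 1 else 0 := by
  induction l with
  | zero => funext x; simp [psi]
  | succ l ih =>
    funext x
    simp [psi, ih, Rop_const H]

lemma Rop_psi_zero (H : Hyp Q V c ρ π) (l : ℕ) :
    Rop Q π (psi Q π Y l 0) = fun _ => 0 := by
  rw [psi_zero_right H]; exact Rop_const H _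

lemma Rop_psi (H : Hyp Q V c ρ π) (hY : Nice V π Y) (l k : ℕ) :
    Rop Q π (psi Q π Y l k) =ᵐ[π]
      fun x => ∑ j ∈ range (l + 1), Rj Q π (j + 1) (theta Q π Y (l - j) k) x := by
  induction l with
  | zero =>
    simp only [zero_add, Finset.sum_range_one, Rj_one]
    rfl
  | succ l ih =>
    have e1 : psi Q π Y (l+1) k = fun x => theta Q π Y (l+1) k x + Rop Q π (psi Q π Y l k) x :=
      funext fun x => psi_succ_eq l k x
    have h1 := Rop_add H (theta_nice H hY (l+1) k) ((psi_nice H hY l k).Rop H)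
    have h2 := Rop_congr H ih
    have h3 := Rop_sum H (range (l+1)) (f := fun j => Rj Q π (j+1) (theta Q π Y (l - j) k))
      (fun j _ => (theta_nice H hY _ k).Rj H (j+1))
    have h4 : ∀ᵐ x ∂π, ∀ j ∈ range (l+1), Rop Q π (Rj Q π (j+1) (theta Q π Y (l - j) k)) x
        = Rj Q π (j+1+1) (theta Q π Y (l - j) k) x :=
      (Filter.eventually_all_finset _).2 fun j _ => Rop_Rj H (theta_nice H hY _ k) (j+1)
    rw [e1]
    filter_upwards [h1, h2, h3, h4] with x g1 g2 g3 g4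
    rw [g1, g2, g3, Finset.sum_congr rfl g4, Finset.sum_range_succ' _ (l+1)]
    simp only [Nat.add_sub_add_right, zero_add, Nat.sub_zero, Rj_one]
    rw [add_comm]

lemma int_psi (H : Hyp Q V c ρ π) (hY : Nice V π Y) (l k : ℕ) :
    ∫ x, psi Q π Y l k x ∂π = ∫ x, theta Q π Y l k x ∂π := by
  cases l with
  | zero => rfl
  | succ l =>
    simp only [psi_succ_eq]
    rw [integral_add ((theta_nice H hY _ _).integrable H) (((psi_nice H hY l k).Rop H).integrable H),
      pi_Rop H (psi_nice H hY l k), add_zero]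

lemma int_psi_zero (H : Hyp Q V c ρ π) (l : ℕ) :
    ∫ x, psi Q π Y l 0 x ∂π = if l = 0 then 1 else 0 := by
  have := H.pr
  rw [psi_zero_right H]; simp

lemma int_psi_one (H : Hyp Q V c ρ π) (hY : Nice V π Y) (h0 : ∫ x, Y x ∂π = 0) (l : ℕ) :
    ∫ x, psi Q π Y l 1 x ∂π = 0 := by
  rw [int_psi H hY]
  cases l with
  | zero => simpa [theta] using h0
  | succ l => simp [theta, Rop_psi_zero H]

lemma conv_sum_le (f g : ℕ → ℝ) (hf : ∀ i, 0 ≤ f i) (A B : ℝ) 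
    (hA : ∀ N, ∑ i ∈ range N, f i ≤ A) (hB : ∀ N, ∑ i ∈ range N, g i ≤ B) (N : ℕ) :
    ∑ l ∈ range N, ∑ j ∈ range (l+1), f j * g (l - j) ≤ A * B := by
  have hA0 : 0 ≤ A := by simpa using hA 0
  calc ∑ l ∈ range N, ∑ j ∈ range (l+1), f j * g (l - j)
      = ∑ m ∈ range N, ∑ k ∈ range (N - m), f m * g k :=
        Finset.sum_range_diag_flip N (fun j k => f j * g k)
    _ ≤ ∑ m ∈ range N, f m * B := by
        refine Finset.sum_le_sum fun m _ => ?_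
        rw [← Finset.mul_sum]
        exact mul_le_mul_of_nonneg_left (hB _) (hf m)
    _ = (∑ m ∈ range N, f m) * B := by rw [Finset.sum_mul]
    _ ≤ A * B := mul_le_mul_of_nonneg_right (hA N) (by simpa using hB 0)


lemma theta_bound (H : Hyp Q V c ρ π) (hY : Nice V π Y) {h β C r : ℝ} (hh : 0 ≤ h) (hβ : 0 < β)
    (hC : C = 2 * c * ∫ x, V x ∂π) (hr : r = ρ ^ β)
    (hbd : ∀ᵐ x ∂π, |Y x| ≤ h * V x ^ β) (k : ℕ) (hk : 1 ≤ k) (hkβ : k * β ≤ 1) :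
    ∃ T : ℕ → ℝ, (∀ l, 0 ≤ T l) ∧
      (∀ l, ∀ᵐ x ∂π, |theta Q π Y l k x| ≤ T l * V x ^ (k * β)) ∧
      ∀ N, ∑ l ∈ range N, T l ≤ h ^ k * (1 + C * (r / (1 - r))) ^ (k - 1) := by
  have hpV := one_le_piV H
  have hc := H.hc
  have hρ0 := H.hρ0
  have hC0 : 0 ≤ C := by rw [hC]; positivity
  have hr0 : 0 < r := by rw [hr]; positivity
  have hr1 : r < 1 := by rw [hr]; exact Real.rpow_lt_one hρ0.le H.hρ1 hβ
  have hr1' : 0 < 1 - r := by linarith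
  -- pointwise bound for powers of Y
  have hYp : ∀ᵐ x ∂π, ∀ i : ℕ, |Y x ^ i / (i.factorial : ℝ)| ≤ h ^ i * V x ^ (i * β) := by
    filter_upwards [hbd] with x hx i
    have hVx : 0 < V x := by linarith [H.hV1 x]
    rw [abs_div, abs_pow, Nat.abs_cast]
    have h1 : (1:ℝ) ≤ i.factorial := by exact_mod_cast Nat.succ_le_of_lt (Nat.factorial_pos i)
    calc |Y x| ^ i / (i.factorial : ℝ) ≤ |Y x| ^ i := div_le_self (by positivity) h1
      _ ≤ (h * V x ^ β) ^ i := by gcongr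
      _ = _ := by
        rw [mul_pow, ← Real.rpow_natCast (V x ^ β) i, ← Real.rpow_mul hVx.le, mul_comm β]
  induction k using Nat.strong_induction_on with
  | _ k ih =>
    have ih' : ∀ m : ℕ, ∃ T : ℕ → ℝ, (1 ≤ m → m < k → (∀ l, 0 ≤ T l) ∧
      (∀ l, ∀ᵐ x ∂π, |theta Q π Y l m x| ≤ T l * V x ^ (m * β)) ∧
      ∀ N, ∑ l ∈ range N, T l ≤ h ^ m * (1 + C * (r / (1 - r))) ^ (m - 1)) := by
      intro m
      by_cases hm : 1 ≤ m ∧ m < k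
      · have hmk : (m:ℝ) * β ≤ 1 := by
          refine le_trans ?_ hkβ
          have : (m:ℝ) ≤ k := by exact_mod_cast hm.2.le
          gcongr
        obtain ⟨T, hT⟩ := ih m hm.2 hm.1 hmk
        exact ⟨T, fun _ _ => hT⟩
      · exact ⟨0, fun a b => absurd ⟨a, b⟩ hm⟩
    choose T hT using ih'
    -- new bound sequence
    set U : ℕ → ℝ := fun l => ∑ i ∈ range (k - 1), h ^ (i + 1) *
      ∑ j ∈ range (l + 1), (C * r ^ (j + 1)) * T (k - (i + 1)) (l - j) with hU
    have hTi : ∀ i ∈ range (k - 1), 1 ≤ k - (i + 1) ∧ k - (i + 1) < k := by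
      intro i hi; rw [Finset.mem_range] at hi; omega
    have hU0 : ∀ l, 0 ≤ U l := by
      intro l
      refine Finset.sum_nonneg fun i hi => mul_nonneg (by positivity) (Finset.sum_nonneg fun j _ =>
        mul_nonneg (by positivity) ((hT _ (hTi i hi).1 (hTi i hi).2).1 _))
    refine ⟨fun l => match l with | 0 => h ^ k | l + 1 => U l, ?_, ?_, ?_⟩
    · intro l
      cases l with
      | zero => simpa using pow_nonneg hh k
      | succ l => exact hU0 l
    · intro l
      cases l with
      | zero => filter_upwards [hYp] with x hx; exact hx k
      | succ l =>
        have hR : ∀ᵐ x ∂π, ∀ i ∈ range (k - 1), ∀ j ∈ range (l + 1),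
            |Rj Q π (j+1) (theta Q π Y (l - j) (k - (i+1))) x| ≤
              (C * r ^ (j + 1)) * T (k - (i + 1)) (l - j) * V x ^ (((k - (i+1) : ℕ) : ℝ) * β) := by
          refine (Filter.eventually_all_finset _).2 fun i hi =>
            (Filter.eventually_all_finset _).2 fun j _ => ?_
          obtain ⟨hT0, hTb, -⟩ := hT _ (hTi i hi).1 (hTi i hi).2
          obtain ⟨hm1, hm2⟩ := hTi i hi
          set m := k - (i+1) with hm
          have hm1' : (1:ℝ) ≤ m := by exact_mod_cast hm1
          have hmk : (m:ℝ) ≤ k := by exact_mod_cast hm2.le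
          have hα0 : 0 < (m:ℝ) * β := by positivity
          have hα1 : (m:ℝ) * β ≤ 1 := le_trans (by gcongr) hkβ
          filter_upwards [R_bound H (j+1) (theta_nice H hY (l - j) m).meas (hT0 (l - j)) hα0 hα1
            (hTb (l - j))] with x hx
          refine hx.trans ?_
          have hVx : 0 < V x := by linarith [H.hV1 x]
          refine mul_le_mul_of_nonneg_right ?_ (by positivity)
          rw [mul_comm, ← hC]
          refine mul_le_mul_of_nonneg_right ?_ (hT0 _)
          refine mul_le_mul_of_nonneg_left ?_ hC0
          rw [hr]
          refine pow_le_pow_left₀ (by positivity) ?_ _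
          refine Real.rpow_le_rpow_of_exponent_ge hρ0 H.hρ1.le ?_
          nlinarith
        have hRp : ∀ᵐ x ∂π, ∀ i ∈ range k, Rop Q π (psi Q π Y l (k - (i+1))) x =
            ∑ j ∈ range (l + 1), Rj Q π (j + 1) (theta Q π Y (l - j) (k - (i+1))) x :=
          (Filter.eventually_all_finset _).2 fun i _ => Rop_psi H hY l _
        filter_upwards [hR, hRp, hYp] with x g1 g2 g3
        have hVx : 0 < V x := by linarith [H.hV1 x]
        obtain ⟨k', rfl⟩ : ∃ k', k = k' + 1 := ⟨k - 1, by omega⟩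
        have hth : theta Q π Y (l+1) (k'+1) x = ∑ i ∈ range k',
            Y x ^ (i + 1) / ((i + 1).factorial : ℝ) *
              Rop Q π (psi Q π Y l (k' + 1 - (i + 1))) x := by
          simp only [theta]
          rw [Finset.sum_range_succ, Nat.sub_self, Rop_psi_zero H]
          simp
        rw [hth]
        refine (Finset.abs_sum_le_sum_abs _ _).trans ?_
        simp only [hU, Nat.add_sub_cancel]
        rw [Finset.sum_mul]
        refine Finset.sum_le_sum fun i hi => ?_
        have hi' : i < k' := Finset.mem_range.1 hi
        rw [abs_mul, g2 i (Finset.mem_range.2 (by omega))]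
        have a1 := g3 (i+1)
        have a2 : |∑ j ∈ range (l + 1), Rj Q π (j + 1) (theta Q π Y (l - j) (k' + 1 - (i+1))) x|
            ≤ (∑ j ∈ range (l + 1), (C * r ^ (j + 1)) * T (k' + 1 - (i + 1)) (l - j)) *
              V x ^ (((k' + 1 - (i+1) : ℕ) : ℝ) * β) := by
          refine (Finset.abs_sum_le_sum_abs _ _).trans ?_
          rw [Finset.sum_mul]
          exact Finset.sum_le_sum fun j hj => g1 i (by simpa using hi) j hj
        refine (mul_le_mul a1 a2 (abs_nonneg _) (by positivity)).trans_eq ?_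
        have e : ((k' + 1 : ℕ) : ℝ) * β = ((i+1 : ℕ) : ℝ) * β + ((k' + 1 - (i+1) : ℕ) : ℝ) * β := by
          rw [← add_mul, ← Nat.cast_add]
          rw [show (i + 1) + (k' + 1 - (i + 1)) = k' + 1 by omega]
        rw [e, Real.rpow_add hVx]
        ring
    · intro N
      set A := 1 + C * (r / (1 - r)) with hA
      have hA1 : 0 ≤ C * (r / (1 - r)) := by positivity
      have hA0 : 0 ≤ A := by linarith
      have hgeo : ∀ N, ∑ j ∈ range N, C * r ^ (j + 1) ≤ A - 1 := by
        intro N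
        have h1 : ∑ j ∈ range N, r ^ j ≤ (1 - r)⁻¹ := by
          have := (summable_geometric_of_lt_one hr0.le hr1).sum_le_tsum (range N)
            (fun i _ => by positivity)
          rwa [tsum_geometric_of_lt_one hr0.le hr1] at this
        calc ∑ j ∈ range N, C * r ^ (j + 1) = C * r * ∑ j ∈ range N, r ^ j := by
              rw [Finset.mul_sum]; exact Finset.sum_congr rfl fun j _ => by ring
          _ ≤ C * r * (1 - r)⁻¹ := by gcongr
          _ = A - 1 := by rw [hA]; ring
      have hUs : ∀ N, ∑ l ∈ range N, U l ≤ h ^ k * (A ^ (k - 1) - 1) := by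
        intro N
        simp only [hU]
        rw [Finset.sum_comm]
        calc ∑ i ∈ range (k - 1), ∑ l ∈ range N, h ^ (i + 1) *
              ∑ j ∈ range (l + 1), (C * r ^ (j + 1)) * T (k - (i + 1)) (l - j)
            ≤ ∑ i ∈ range (k - 1), h ^ k * ((A - 1) * A ^ (k - 1 - 1 - i)) := by
              refine Finset.sum_le_sum fun i hi => ?_
              obtain ⟨hT0, hTb, hTs⟩ := hT _ (hTi i hi).1 (hTi i hi).2
              rw [← Finset.mul_sum]
              have := conv_sum_le (fun j => C * r ^ (j+1)) (T (k - (i+1))) (fun j => by positivity)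
                _ _ hgeo hTs N
              refine (mul_le_mul_of_nonneg_left this (by positivity)).trans_eq ?_
              rw [Finset.mem_range] at hi
              have e1 : h ^ k = h ^ (i+1) * h ^ (k - (i+1)) := by
                rw [← pow_add]; congr 1; omega
              have e2 : k - (i+1) - 1 = k - 1 - 1 - i := by omega
              rw [e1, e2]; ring
          _ = h ^ k * ((∑ i ∈ range (k - 1), A ^ (k - 1 - 1 - i)) * (A - 1)) := by
              rw [Finset.sum_mul, Finset.mul_sum]
              exact Finset.sum_congr rfl fun i _ => by ring
          _ = h ^ k * (A ^ (k - 1) - 1) := by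
              rw [Finset.sum_range_reflect (fun i => A ^ i), geom_sum_mul]
      cases N with
      | zero => simp only [Finset.range_zero, Finset.sum_empty]; positivity
      | succ N =>
        rw [Finset.sum_range_succ']
        have := hUs N
        simp only
        nlinarith

lemma int_bound (H : Hyp Q V c ρ π) {f : X → ℝ} {t α : ℝ} (hf : Measurable f) (ht : 0 ≤ t)
    (h1 : α ≤ 1) (hb : ∀ᵐ x ∂π, |f x| ≤ t * V x ^ α) :
    |∫ x, f x ∂π| ≤ t * ∫ x, V x ∂π := by
  have hi := int_of_bd H.hV H.hV1 π H.int h1 hf hb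
  rw [← integral_const_mul]
  refine abs_integral_le_integral_abs.trans (integral_mono_ae hi.abs (H.int.const_mul t) ?_)
  filter_upwards [hb] with x hx
  refine hx.trans (mul_le_mul_of_nonneg_left ?_ ht)
  calc V x ^ α ≤ V x ^ (1:ℝ) := Real.rpow_le_rpow_of_exponent_le (H.hV1 x) h1
    _ = _ := Real.rpow_one _

/-- Main summability bound on the block coefficients. -/
lemma a_bound (H : Hyp Q V c ρ π) (hY : Nice V π Y) {h β C r : ℝ} (hh : 0 ≤ h) (hβ : 0 < β)
    (hC : C = 2 * c * ∫ x, V x ∂π) (hr : r = ρ ^ β)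
    (hbd : ∀ᵐ x ∂π, |Y x| ≤ h * V x ^ β) (k : ℕ) (hk : 1 ≤ k) (hkβ : k * β ≤ 1) (N : ℕ) :
    ∑ l ∈ range N, |∫ x, psi Q π Y l k x ∂π| ≤ h ^ k * (C / (1 - r)) ^ (k - 1) * (C / 2) := by
  have hpV := one_le_piV H
  have hc := H.hc
  have hρ0 := H.hρ0
  have hC1 : 1 ≤ C := by rw [hC]; nlinarith
  have hr0 : 0 < r := by rw [hr]; positivity
  have hr1 : r < 1 := by rw [hr]; exact Real.rpow_lt_one hρ0.le H.hρ1 hβ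
  have hr1' : 0 < 1 - r := by linarith
  obtain ⟨T, hT0, hTb, hTs⟩ := theta_bound H hY hh hβ hC hr hbd k hk hkβ
  have h1 : ∀ l, |∫ x, psi Q π Y l k x ∂π| ≤ T l * ∫ x, V x ∂π := fun l => by
    rw [int_psi H hY]
    exact int_bound H (theta_nice H hY l k).meas (hT0 l) hkβ (hTb l)
  have hA : 1 + C * (r / (1 - r)) ≤ C / (1 - r) := by
    rw [le_div_iff₀ hr1', add_mul, mul_assoc, div_mul_cancel₀ _ hr1'.ne']
    nlinarith
  have hp2 : ∫ x, V x ∂π ≤ C / 2 := by rw [hC]; nlinarith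
  calc ∑ l ∈ range N, |∫ x, psi Q π Y l k x ∂π| ≤ ∑ l ∈ range N, T l * ∫ x, V x ∂π :=
        Finset.sum_le_sum fun l _ => h1 l
    _ = (∑ l ∈ range N, T l) * ∫ x, V x ∂π := by rw [Finset.sum_mul]
    _ ≤ (h ^ k * (1 + C * (r / (1 - r))) ^ (k - 1)) * (C / 2) := by
        refine mul_le_mul (hTs N) hp2 (by linarith) ?_
        positivity
    _ ≤ _ := by gcongr

lemma Rop_psi_one (H : Hyp Q V c ρ π) (hY : Nice V π Y) (l : ℕ) :
    Rop Q π (psi Q π Y l 1) =ᵐ[π] Rj Q π (l + 1) Y := by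
  induction l with
  | zero =>
    have : psi Q π Y 0 1 = Y := by funext x; simp [psi]
    rw [this, Rj_one]
  | succ l ih =>
    have e1 : psi Q π Y (l+1) 1 = Rop Q π (psi Q π Y l 1) := funext fun x => by
      rw [psi_succ_eq]; simp [theta, Rop_psi_zero H]
    rw [e1]
    exact (Rop_congr H ih).trans (Rop_Rj H hY (l+1))

lemma a_two (H : Hyp Q V c ρ π) (hY : Nice V π Y) {h β C r : ℝ} (hh : 0 ≤ h) (hβ : 0 < β)
    (hC : C = 2 * c * ∫ x, V x ∂π) (hr : r = ρ ^ β)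
    (hbd : ∀ᵐ x ∂π, |Y x| ≤ h * V x ^ β) (hkβ : 2 * β ≤ 1) (l : ℕ) :
    |∫ x, psi Q π Y l 2 x ∂π| ≤ h ^ 2 * C * (C / 2) * r ^ l := by
  have hpV := one_le_piV H
  have hc := H.hc
  have hρ0 := H.hρ0
  have hC1 : 1 ≤ C := by rw [hC]; nlinarith
  have hr0 : 0 < r := by rw [hr]; positivity
  have hp2 : ∫ x, V x ∂π ≤ C / 2 := by rw [hC]; nlinarith
  rw [int_psi H hY]
  have key : ∀ᵐ x ∂π, |theta Q π Y l 2 x| ≤ (h ^ 2 * C * r ^ l) * V x ^ (2 * β) := by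
    cases l with
    | zero =>
      filter_upwards [hbd] with x hx
      have hVx : 0 < V x := by linarith [H.hV1 x]
      simp only [theta, pow_zero, mul_one]
      rw [abs_div, abs_pow]
      have e : V x ^ (2 * β) = (V x ^ β) ^ 2 := by
        rw [← Real.rpow_natCast (V x ^ β) 2, ← Real.rpow_mul hVx.le, mul_comm]; norm_num
      rw [e]
      calc |Y x| ^ 2 / |((2:ℕ).factorial : ℝ)| ≤ |Y x| ^ 2 := 
            div_le_self (by positivity) (by norm_num [Nat.factorial])
        _ ≤ (h * V x ^ β) ^ 2 := by gcongr
        _ = h ^ 2 * 1 * (V x ^ β) ^ 2 := by ring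
        _ ≤ _ := by gcongr
    | succ l =>
      filter_upwards [hbd, Rop_psi_one H hY l,
        R_bound H (l+1) hY.meas hh hβ (by linarith) hbd] with x g1 g2 g3
      have hVx : 0 < V x := by linarith [H.hV1 x]
      simp only [theta, Finset.sum_range_succ, Finset.sum_range_zero]
      norm_num [Rop_psi_zero H]
      rw [g2]
      refine (mul_le_mul g1 g3 (abs_nonneg _) (by positivity)).trans_eq ?_
      have e : V x ^ (2 * β) = (V x ^ β) ^ 2 := by
        rw [← Real.rpow_natCast (V x ^ β) 2, ← Real.rpow_mul hVx.le, mul_comm]; norm_num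
      rw [e, ← hC, hr]; ring
  refine (int_bound H (theta_nice H hY l 2).meas (by positivity) hkβ key).trans ?_
  calc h ^ 2 * C * r ^ l * ∫ x, V x ∂π ≤ h ^ 2 * C * r ^ l * (C / 2) := by gcongr
    _ = _ := by ring

end RosC

namespace RosC
variable {X : Type*} [MeasurableSpace X]
variable {Q : Kernel X X} {V : X → ℝ} {c ρ : ℝ} {π : Measure X}
variable {Y : X → ℝ}

section chain
variable {Ω : Type*} [MeasurableSpace Ω] {P : Measure Ω} {Xs : ℕ → Ω → X}

/-- past sigma-algebra -/
@[reducible] def past (Xs : ℕ → Ω → X) (t : ℕ) : MeasurableSpace Ω :=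
  ⨆ i ∈ Finset.range (t + 1), MeasurableSpace.comap (Xs i) inferInstance

lemma past_le {ξ : Measure X} (hch : IsMarkovChain P Xs ξ Q) (t : ℕ) :
    past Xs t ≤ (inferInstance : MeasurableSpace Ω) :=
  iSup₂_le fun i _ => (hch.meas i).comap_le

lemma meas_past (t i : ℕ) (hi : i ≤ t) : Measurable[past Xs t] (Xs i) := by
  rw [measurable_iff_comap_le]
  exact le_iSup₂_of_le (f := fun i (_ : i ∈ Finset.range (t+1)) =>
    MeasurableSpace.comap (Xs i) inferInstance) i (Finset.mem_range.2 (by omega)) le_rfl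

lemma chain_sets [IsProbabilityMeasure P] [IsMarkovKernel Q] {ξ : Measure X}
    (hch : IsMarkovChain P Xs ξ Q) (t : ℕ) (A : Set Ω) (hA : MeasurableSet[past Xs t] A)
    (u : Set X) (hu : MeasurableSet u) :
    P (A ∩ Xs (t+1) ⁻¹' u) = ∫⁻ ω in A, Q (Xs t ω) u ∂P := by
  have hm := past_le hch t
  have hA' : MeasurableSet A := hm _ hA
  have hmk := hch.markov t (u.indicator 1) (measurable_one.indicator hu) (fun x => by
    by_cases hx : x ∈ u <;> simp [hx])
  have hInt0 : Integrable (fun ω => u.indicator (1 : X → ℝ) (Xs (t+1) ω)) P := by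
    refine (integrable_const (1:ℝ)).mono'
      ((measurable_one.indicator hu).comp (hch.meas (t+1))).aestronglyMeasurable
      (ae_of_all _ fun ω => ?_)
    by_cases hx : Xs (t+1) ω ∈ u <;> simp [hx]
  have h1 := setIntegral_condExp hm hInt0 hA
  rw [setIntegral_congr_ae hA' (g := fun ω => (Q (Xs t ω)).real u)] at h1
  · have h2 : ∫ ω in A, u.indicator (1 : X → ℝ) (Xs (t+1) ω) ∂P = P.real (A ∩ Xs (t+1) ⁻¹' u) := by
      have : (fun ω => u.indicator (1 : X → ℝ) (Xs (t+1) ω))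
          = (Xs (t+1) ⁻¹' u).indicator 1 := by
        funext ω; by_cases hx : Xs (t+1) ω ∈ u <;> simp [hx]
      rw [this, integral_indicator_one ((hch.meas (t+1)) hu), measureReal_restrict_apply
        ((hch.meas (t+1)) hu), Set.inter_comm]
    rw [h2] at h1
    have h3 : ∫ ω in A, (Q (Xs t ω)).real u ∂P = (∫⁻ ω in A, Q (Xs t ω) u ∂P).toReal := by
      refine integral_toReal ?_ (ae_of_all _ fun ω => measure_lt_top _ _)
      exact ((Q.measurable_coe hu).comp (hch.meas t)).aemeasurable
    rw [h3] at h1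
    have hfin : ∫⁻ ω in A, Q (Xs t ω) u ∂P ≠ ∞ := by
      refine ne_of_lt (lt_of_le_of_lt (lintegral_mono (g := fun _ => 1) fun ω => prob_le_one) ?_)
      simp
    exact ((ENNReal.toReal_eq_toReal_iff' hfin (measure_ne_top _ _)).1 h1).symm
  · filter_upwards [hmk] with ω hω _
    refine hω.trans ?_
    rw [integral_indicator_one hu]

lemma chain_stat [IsProbabilityMeasure P] (H : Hyp Q V c ρ π) (hch : IsMarkovChain P Xs π Q)
    (t : ℕ) : P.map (Xs t) = π := by
  have := H.mker
  induction t with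
  | zero => exact hch.init
  | succ t ih =>
    ext u hu
    rw [Measure.map_apply (hch.meas _) hu]
    have := chain_sets hch t Set.univ MeasurableSet.univ u hu
    rw [Set.univ_inter, Measure.restrict_univ] at this
    rw [this]
    conv_rhs => rw [← H.inv, Measure.bind_apply hu Q.measurable.aemeasurable, ← ih,
      lintegral_map (Q.measurable_coe hu) (hch.meas t)]

lemma chain_law [IsProbabilityMeasure P] [IsMarkovKernel Q] {ξ : Measure X}
    (hch : IsMarkovChain P Xs ξ Q) (t : ℕ) (Z : Ω → ℝ) (hZ : Measurable[past Xs t] Z) :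
    P.map (fun ω => ((Z ω, Xs t ω), Xs (t+1) ω)) =
      (P.map (fun ω => (Z ω, Xs t ω))) ⊗ₘ (Q.comap Prod.snd measurable_snd) := by
  have hm := past_le hch t
  have hZ' : Measurable Z := hZ.mono hm le_rfl
  have hT : Measurable (fun ω => (Z ω, Xs t ω)) := hZ'.prodMk (hch.meas t)
  have hT' : Measurable[past Xs t] (fun ω => (Z ω, Xs t ω)) := hZ.prodMk (meas_past t t le_rfl)
  have := Measure.isProbabilityMeasure_map (μ := P) hT.aemeasurable
  have := Measure.isProbabilityMeasure_map (μ := P) (hT.prodMk (hch.meas (t+1))).aemeasurable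
  refine Measure.ext_prod fun {s u} hs hu => ?_
  rw [Measure.map_apply (hT.prodMk (hch.meas (t+1))) (hs.prod hu),
    Measure.compProd_apply_prod hs hu, setLIntegral_map hs _ hT]
  · have := chain_sets hch t _ (hT' hs) u hu
    simp only [Kernel.comap_apply]
    exact this
  · exact (Kernel.measurable_coe _ hu)

lemma chain_int [IsProbabilityMeasure P] [IsMarkovKernel Q] {ξ : Measure X}
    (hch : IsMarkovChain P Xs ξ Q) (t : ℕ) (Z : Ω → ℝ) (hZ : Measurable[past Xs t] Z)
    (f : X → ℝ) (hf : Measurable f) (hi : Integrable (fun ω => Z ω * f (Xs (t+1) ω)) P) :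
    ∫ ω, Z ω * f (Xs (t+1) ω) ∂P = ∫ ω, Z ω * ∫ y, f y ∂(Q (Xs t ω)) ∂P := by
  have hm := past_le hch t
  have hZ' : Measurable Z := hZ.mono hm le_rfl
  have hT : Measurable (fun ω => (Z ω, Xs t ω)) := hZ'.prodMk (hch.meas t)
  have hT2 := hT.prodMk (hch.meas (t+1))
  have := Measure.isProbabilityMeasure_map (μ := P) hT.aemeasurable
  set F : (ℝ × X) × X → ℝ := fun p => p.1.1 * f p.2 with hF
  have hFm : Measurable F := by fun_prop
  have hG : Measurable (fun a : ℝ × X => ∫ b, F (a, b) ∂((Q.comap Prod.snd measurable_snd) a)) :=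
    (StronglyMeasurable.integral_kernel_prod_right' (κ := Q.comap Prod.snd measurable_snd)
      hFm.stronglyMeasurable).measurable
  have hi' : Integrable F (P.map (fun ω => ((Z ω, Xs t ω), Xs (t+1) ω))) := by
    rw [integrable_map_measure hFm.aestronglyMeasurable hT2.aemeasurable]
    exact hi
  have e1 : ∫ ω, Z ω * f (Xs (t+1) ω) ∂P
      = ∫ p, F p ∂(P.map (fun ω => ((Z ω, Xs t ω), Xs (t+1) ω))) :=
    (integral_map hT2.aemeasurable hFm.aestronglyMeasurable).symm
  rw [e1]
  rw [chain_law hch t Z hZ] at hi' ⊢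
  rw [Measure.integral_compProd hi', integral_map hT.aemeasurable hG.aestronglyMeasurable]
  simp only [hF, Kernel.comap_apply, integral_const_mul]

/-- random variables with all moments -/
structure AllMom (P : Measure Ω) (Z : Ω → ℝ) : Prop where
  meas : Measurable Z
  int : ∀ k : ℕ, Integrable (fun ω => |Z ω| ^ k) P

lemma AllMom.integrable {Z : Ω → ℝ} (h : AllMom P Z) : Integrable Z P := by
  have := h.int 1
  refine this.mono' h.meas.aestronglyMeasurable (ae_of_all _ fun ω => ?_)
  simp

lemma AllMom.mul {Z W : Ω → ℝ} (h : AllMom P Z) (h' : AllMom P W) :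
    AllMom P (fun ω => Z ω * W ω) := by
  refine ⟨h.meas.mul h'.meas, fun k => ?_⟩
  refine ((h.int (2*k)).add (h'.int (2*k))).mono'
    (((h.meas.mul h'.meas).abs).pow_const k).aestronglyMeasurable (ae_of_all _ fun ω => ?_)
  rw [Real.norm_of_nonneg (by positivity), abs_mul, mul_pow]
  simp only [Pi.add_apply, mul_comm 2 k, pow_mul]
  nlinarith [sq_nonneg (|Z ω| ^ k - |W ω| ^ k), sq_nonneg (|Z ω| ^ k), sq_nonneg (|W ω| ^ k)]

lemma AllMom.add {Z W : Ω → ℝ} (h : AllMom P Z) (h' : AllMom P W) :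
    AllMom P (fun ω => Z ω + W ω) := by
  refine ⟨h.meas.add h'.meas, fun k => ?_⟩
  refine (((h.int k).add (h'.int k)).const_mul (2 ^ (k-1))).mono'
    (((h.meas.add h'.meas).abs).pow_const k).aestronglyMeasurable (ae_of_all _ fun ω => ?_)
  rw [Real.norm_of_nonneg (by positivity)]
  refine (pow_le_pow_left₀ (abs_nonneg _) (abs_add_le _ _) k).trans ?_
  exact add_pow_le (abs_nonneg _) (abs_nonneg _) k

lemma AllMom.const [IsProbabilityMeasure P] (a : ℝ) : AllMom P (fun _ => a) :=
  ⟨measurable_const, fun _ => integrable_const _⟩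

lemma AllMom.sum [IsProbabilityMeasure P] {ι : Type*} (s : Finset ι) {Z : ι → Ω → ℝ}
    (h : ∀ i ∈ s, AllMom P (Z i)) : AllMom P (fun ω => ∑ i ∈ s, Z i ω) := by
  induction s using Finset.induction_on with
  | empty => simpa using AllMom.const 0
  | insert a s ha ih =>
    simp only [Finset.sum_insert ha]
    exact (h a (by simp)).add (ih fun i hi => h i (by simp [hi]))

lemma AllMom.pow [IsProbabilityMeasure P] {Z : Ω → ℝ} (h : AllMom P Z) (k : ℕ) :
    AllMom P (fun ω => Z ω ^ k) := by
  induction k with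
  | zero => simpa using AllMom.const 1
  | succ k ih => simp only [pow_succ]; exact ih.mul h

lemma AllMom.of_nice [IsProbabilityMeasure P] (H : Hyp Q V c ρ π) (hch : IsMarkovChain P Xs π Q)
    (t : ℕ) {f : X → ℝ} (hf : Nice V π f) : AllMom P (fun ω => f (Xs t ω)) := by
  refine ⟨hf.meas.comp (hch.meas t), fun k => ?_⟩
  have h1 : Integrable (fun x => |f x| ^ k) π := by
    refine ((hf.pow H k).integrable H).abs.congr (ae_of_all _ fun x => ?_)
    simp [abs_pow]
  rw [← chain_stat H hch t] at h1
  exact (integrable_map_measure (hf.meas.abs.pow_const k).aestronglyMeasurable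
    (hch.meas t).aemeasurable).1 h1

/-- partial sums -/
def Ssum (Xs : ℕ → Ω → X) (Y : X → ℝ) (t : ℕ) (ω : Ω) : ℝ := ∑ i ∈ range t, Y (Xs i ω)

lemma Ssum_mom [IsProbabilityMeasure P] (H : Hyp Q V c ρ π) (hch : IsMarkovChain P Xs π Q)
    (hY : Nice V π Y) (t : ℕ) : AllMom P (Ssum Xs Y t) :=
  AllMom.sum _ fun i _ => AllMom.of_nice H hch i hY

lemma Sdiv_mom [IsProbabilityMeasure P] (H : Hyp Q V c ρ π) (hch : IsMarkovChain P Xs π Q)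
    (hY : Nice V π Y) (t k : ℕ) :
    AllMom P (fun ω => Ssum Xs Y t ω ^ k / (k.factorial : ℝ)) := by
  simp only [div_eq_mul_inv]
  exact ((Ssum_mom H hch hY t).pow k).mul (AllMom.const _)

lemma markov_step [IsProbabilityMeasure P] (H : Hyp Q V c ρ π) (hch : IsMarkovChain P Xs π Q)
    (hY : Nice V π Y) (t k : ℕ) {f : X → ℝ} (hf : Nice V π f) :
    ∫ ω, Ssum Xs Y (t+1) ω ^ k / (k.factorial : ℝ) * f (Xs (t+1) ω) ∂P =
      ∫ ω, Ssum Xs Y (t+1) ω ^ k / (k.factorial : ℝ) * Rop Q π f (Xs t ω) ∂P +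
      (∫ ω, Ssum Xs Y (t+1) ω ^ k / (k.factorial : ℝ) ∂P) * ∫ x, f x ∂π := by
  have := H.mker
  have hZ : Measurable[past Xs t] (fun ω => Ssum Xs Y (t+1) ω ^ k / (k.factorial : ℝ)) := by
    refine Measurable.div_const (Measurable.pow_const ?_ k) _
    refine Finset.measurable_sum _ fun i hi => ?_
    exact hY.meas.comp (meas_past t i (by rw [Finset.mem_range] at hi; omega))
  rw [chain_int hch t _ hZ f hf.meas
    ((Sdiv_mom H hch hY (t+1) k).mul (AllMom.of_nice H hch (t+1) hf)).integrable,
    ← integral_mul_const, ← integral_add]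
  · refine integral_congr_ae (ae_of_all _ fun ω => ?_)
    simp only [Rop]; ring
  · exact ((Sdiv_mom H hch hY (t+1) k).mul (AllMom.of_nice H hch t (hf.Rop H))).integrable
  · exact ((Sdiv_mom H hch hY (t+1) k).integrable).mul_const _

open PowerSeries in
lemma coeff_resc (a : ℝ) (k : ℕ) :
    coeff k (rescale a (PowerSeries.exp ℝ)) = a ^ k / (k.factorial : ℝ) := by
  rw [coeff_rescale, coeff_exp]; simp [div_eq_mul_inv]

/-- moment series -/
def Fser (P : Measure Ω) (Xs : ℕ → Ω → X) (Y : X → ℝ) (t : ℕ) : PowerSeries ℝ :=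
  PowerSeries.mk fun k => ∫ ω, Ssum Xs Y t ω ^ k / (k.factorial : ℝ) ∂P

/-- block series -/
def aser (Q : Kernel X X) (π : Measure X) (Y : X → ℝ) (l : ℕ) : PowerSeries ℝ :=
  PowerSeries.mk fun k => ∫ x, psi Q π Y l k x ∂π

/-- random series -/
def ES (Xs : ℕ → Ω → X) (Y : X → ℝ) (t : ℕ) (ω : Ω) : PowerSeries ℝ :=
  PowerSeries.rescale (Ssum Xs Y t ω) (PowerSeries.exp ℝ)

def Psi (Q : Kernel X X) (π : Measure X) (Y : X → ℝ) (l : ℕ) (x : X) : PowerSeries ℝ :=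
  PowerSeries.mk fun k => psi Q π Y l k x

def RPsi (Q : Kernel X X) (π : Measure X) (Y : X → ℝ) (l : ℕ) (x : X) : PowerSeries ℝ :=
  PowerSeries.mk fun k => Rop Q π (psi Q π Y l k) x

lemma Psi_zero (x : X) : Psi Q π Y 0 x = PowerSeries.rescale (Y x) (PowerSeries.exp ℝ) := by
  ext k; rw [coeff_resc]; simp [Psi, psi]

lemma Psi_succ (l : ℕ) (x : X) : Psi Q π Y (l+1) x
    = PowerSeries.rescale (Y x) (PowerSeries.exp ℝ) * RPsi Q π Y l x := by
  ext k
  rw [PowerSeries.coeff_mul]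
  simp only [coeff_resc, Psi, RPsi, PowerSeries.coeff_mk, psi]

lemma ES_succ (t : ℕ) (ω : Ω) : ES Xs Y (t+1) ω
    = ES Xs Y t ω * PowerSeries.rescale (Y (Xs t ω)) (PowerSeries.exp ℝ) := by
  unfold ES
  rw [PowerSeries.exp_mul_exp_eq_exp_add]
  simp [Ssum, Finset.sum_range_succ]

def Mt (Q : Kernel X X) (π : Measure X) (P : Measure Ω) (Xs : ℕ → Ω → X) (Y : X → ℝ) (t l : ℕ) :
    PowerSeries ℝ :=
  PowerSeries.mk fun k => ∫ ω, PowerSeries.coeff k (ES Xs Y t ω * Psi Q π Y l (Xs t ω)) ∂P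

lemma Mt_zero (t : ℕ) : Mt Q π P Xs Y t 0 = Fser P Xs Y (t+1) := by
  ext k
  simp only [Mt, Fser, PowerSeries.coeff_mk, Psi_zero]
  simp only [← ES_succ]
  simp only [ES, coeff_resc]

lemma Mt_step [IsProbabilityMeasure P] (H : Hyp Q V c ρ π) (hch : IsMarkovChain P Xs π Q)
    (hY : Nice V π Y) (t l : ℕ) :
    Mt Q π P Xs Y (t+1) l = Mt Q π P Xs Y t (l+1) + aser Q π Y l * Fser P Xs Y (t+1) := by
  ext k
  simp only [Mt, map_add, PowerSeries.coeff_mk, Psi_succ]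
  simp only [← mul_assoc, ← ES_succ]
  simp only [PowerSeries.coeff_mul, ES, coeff_resc, Psi, RPsi, PowerSeries.coeff_mk]
  rw [integral_finsetSum, integral_finsetSum]
  · rw [← PowerSeries.coeff_mul, mul_comm (aser Q π Y l), PowerSeries.coeff_mul,
      ← Finset.sum_add_distrib]
    refine Finset.sum_congr rfl fun p _ => ?_
    rw [markov_step H hch hY t p.1 (psi_nice H hY l p.2)]
    simp [aser, Fser]
  · intro p _
    exact ((Sdiv_mom H hch hY (t+1) p.1).mul
      (AllMom.of_nice H hch t ((psi_nice H hY l p.2).Rop H))).integrable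
  · intro p _
    exact ((Sdiv_mom H hch hY (t+1) p.1).mul
      (AllMom.of_nice H hch (t+1) (psi_nice H hY l p.2))).integrable

lemma Fser_zero [IsProbabilityMeasure P] : Fser P Xs Y 0 = 1 := by
  ext k
  simp only [Fser, PowerSeries.coeff_mk, Ssum, Finset.range_zero, Finset.sum_empty,
    PowerSeries.coeff_one]
  by_cases hk : k = 0 <;> simp [hk]

lemma Mt_base [IsProbabilityMeasure P] (H : Hyp Q V c ρ π) (hch : IsMarkovChain P Xs π Q)
    (hY : Nice V π Y) (l : ℕ) : Mt Q π P Xs Y 0 l = aser Q π Y l * Fser P Xs Y 0 := by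
  rw [Fser_zero, mul_one]
  ext k
  have : ∀ ω, ES Xs Y 0 ω = 1 := fun ω => by
    ext k
    rw [ES, coeff_resc]
    simp only [Ssum, Finset.range_zero, Finset.sum_empty, PowerSeries.coeff_one]
    by_cases hk : k = 0 <;> simp [hk]
  simp only [Mt, this, one_mul, PowerSeries.coeff_mk, aser, Psi]
  have e := integral_map (μ := P) (φ := Xs 0) (hch.meas 0).aemeasurable (f := psi Q π Y l k)
    (psi_nice H hY l k).meas.aestronglyMeasurable
  rw [hch.init] at e
  exact e.symm

lemma Mt_eq [IsProbabilityMeasure P] (H : Hyp Q V c ρ π) (hch : IsMarkovChain P Xs π Q)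
    (hY : Nice V π Y) (t l : ℕ) :
    Mt Q π P Xs Y t l = ∑ s ∈ range (t+1), aser Q π Y (l + s) * Fser P Xs Y (t - s) := by
  induction t generalizing l with
  | zero => simpa using Mt_base H hch hY l
  | succ t ih =>
    rw [Mt_step H hch hY, ih, Finset.sum_range_succ' _ (t+1)]
    simp only [Nat.add_sub_add_right, add_zero, Nat.sub_zero]
    congr 1
    refine Finset.sum_congr rfl fun s _ => ?_
    rw [show l + 1 + s = l + (s + 1) by omega]

lemma renewal [IsProbabilityMeasure P] (H : Hyp Q V c ρ π) (hch : IsMarkovChain P Xs π Q)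
    (hY : Nice V π Y) (n : ℕ) :
    Fser P Xs Y (n+1) = Fser P Xs Y n + ∑ l ∈ range (n+1),
      (aser Q π Y l - if l = 0 then 1 else 0) * Fser P Xs Y (n - l) := by
  have h := Mt_eq H hch hY n 0
  rw [Mt_zero] at h
  simp only [sub_mul, Finset.sum_sub_distrib, ite_mul, one_mul, zero_mul]
  rw [Finset.sum_ite_eq' (range (n+1)) 0, h]
  simp

end chain
end RosC

namespace RosD
open RosA RosB RosC

/-- the family of bounds on the summed cumulant-type coefficients -/
def Dser (N γ C ρ : ℝ) : PowerSeries ℝ := PowerSeries.mk fun k =>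
  if k < 2 then 0 else if k = 2 then Kc N γ C * (1/(1-ρ^((1:ℝ)/6)))
  else hk N γ k ^ k * (C/(1-ρ^(1/(2*(k:ℝ)))))^(k-1) * (C/2)

/-- the final bounds -/
def Dt (N γ C ρ : ℝ) (k : ℕ) : ℝ :=
  (C*(2*γ)^γ*N)^k * (k.factorial : ℝ)^(γ+2) *
    ((ρ^((1:ℝ)/2))⁻¹ * (Real.log (1/ρ))⁻¹^(k-1))

lemma log_pos' {ρ : ℝ} (h0 : 0 < ρ) (h1 : ρ < 1) : 0 < Real.log (1/ρ) :=
  Real.log_pos (by rw [lt_div_iff₀ h0]; linarith)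

lemma Dt_aux {N γ C ρ : ℝ} (hN : 0 ≤ N) (hγ : 0 ≤ γ) (hC : 0 ≤ C) (h0 : 0 < ρ) (h1 : ρ < 1)
    (k : ℕ) (M x : ℝ) (hM : M ≤ (k.factorial : ℝ)^2)
    (hx : x ≤ M * ((C*(2*γ)^γ*N)^k * (k.factorial:ℝ)^γ *
      ((ρ^((1:ℝ)/2))⁻¹ * (Real.log (1/ρ))⁻¹^(k-1)))) : x ≤ Dt N γ C ρ k := by
  have hL := log_pos' h0 h1
  have hf : (0:ℝ) < k.factorial := by positivity
  have h2 : (k.factorial : ℝ)^(γ+2) = (k.factorial:ℝ)^γ * (k.factorial : ℝ)^2 := by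
    rw [Real.rpow_add hf]; norm_num
  refine hx.trans ?_
  unfold Dt
  rw [h2]
  have : 0 ≤ (C*(2*γ)^γ*N)^k * (k.factorial:ℝ)^γ *
      ((ρ^((1:ℝ)/2))⁻¹ * (Real.log (1/ρ))⁻¹^(k-1)) := by positivity
  nlinarith [mul_le_mul_of_nonneg_right hM this]

lemma D_le_Dt {N γ C ρ : ℝ} (hN : 0 ≤ N) (hγ : 0 ≤ γ) (hC : 0 ≤ C) (h0 : 0 < ρ) (h1 : ρ < 1)
    (k : ℕ) (h2 : 2 ≤ k) :
    PowerSeries.coeff k (Dser N γ C ρ)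
      + (if k = 4 then Kc N γ C ^2 * (1/(1-ρ^((1:ℝ)/6)))^3 else 0) ≤ Dt N γ C ρ k := by
  unfold Dser
  rw [PowerSeries.coeff_mk, if_neg (by omega)]
  by_cases hk2 : k = 2
  · subst hk2
    simp only [if_true, show (2:ℕ) ≠ 4 by decide, if_false, add_zero]
    refine Dt_aux hN hγ hC h0 h1 2 4 _ (by norm_num [Nat.factorial]) ?_
    simpa using K_bound hN hγ hC h0 h1
  rw [if_neg hk2]
  by_cases hk4 : k = 4
  · subst hk4
    rw [if_pos rfl]
    refine Dt_aux hN hγ hC h0 h1 4 (256+54) _ (by norm_num [Nat.factorial]) ?_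
    have e1 := D_bound hN hγ hC h0 h1 4 (by norm_num)
    have e2 := delta_bound hN hγ hC h0 h1
    rw [add_mul]
    refine add_le_add (e1.trans (le_of_eq ?_)) e2
    norm_num
  · rw [if_neg hk4, add_zero]
    refine Dt_aux hN hγ hC h0 h1 k _ _ ?_ (D_bound hN hγ hC h0 h1 k h2)
    linarith [fact_bound k h2]

section
variable {X : Type*} [MeasurableSpace X]
variable {Q : Kernel X X} {V : X → ℝ} {c ρ : ℝ} {π : Measure X}
variable {Y : X → ℝ}

/-- centered coefficients -/
def bser (Q : Kernel X X) (π : Measure X) (Y : X → ℝ) (l : ℕ) : PowerSeries ℝ :=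
  aser Q π Y l - if l = 0 then 1 else 0

lemma coeff_b (l k : ℕ) (hk : 1 ≤ k) :
    PowerSeries.coeff k (bser Q π Y l) = ∫ x, psi Q π Y l k x ∂π := by
  unfold bser aser
  have : PowerSeries.coeff k (if l = 0 then (1 : PowerSeries ℝ) else 0) = 0 := by
    split_ifs
    · rw [PowerSeries.coeff_one, if_neg (by omega)]
    · simp
  rw [map_sub, this, PowerSeries.coeff_mk, sub_zero]

lemma coeff_b0 (H : Hyp Q V c ρ π) (l : ℕ) :
    PowerSeries.coeff 0 (bser Q π Y l) = 0 := by
  unfold bser aser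
  rw [map_sub, PowerSeries.coeff_mk, int_psi_zero H l]
  split_ifs <;> simp

lemma b_two (H : Hyp Q V c ρ π) (hY : Nice V π Y) {N γ C : ℝ} (hN : 0 ≤ N) (hγ : 0 ≤ γ)
    (hC : C = 2*c*∫ x, V x ∂π)
    (hbd : ∀ k : ℕ, 1 ≤ k → ∀ᵐ x ∂π, |Y x| ≤ hk N γ k * V x ^ (1/(2*(k:ℝ)))) (l : ℕ) :
    |PowerSeries.coeff 2 (bser Q π Y l)| ≤ Kc N γ C * (ρ^((1:ℝ)/6))^l := by
  have hpi := one_le_piV H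
  have hc := H.hc
  have hC0 : 0 ≤ C := by rw [hC]; positivity
  rw [coeff_b l 2 (by norm_num)]
  have h := a_two H hY (hk_nonneg hN hγ 2) (β := 1/(2*((2:ℕ):ℝ))) (by norm_num) hC rfl
    (hbd 2 (by norm_num)) (by norm_num) l
  refine h.trans ?_
  unfold Kc
  have hK : 0 ≤ hk N γ 2 ^2 * C * (C/2) := by positivity
  have hρ := H.hρ0
  refine mul_le_mul_of_nonneg_left ?_ hK
  refine pow_le_pow_left₀ (by positivity) ?_ l
  exact Real.rpow_le_rpow_of_exponent_ge H.hρ0 H.hρ1.le (by norm_num)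

lemma core [Nonempty X] {Ω : Type*} [MeasurableSpace Ω] {P : Measure Ω} [IsProbabilityMeasure P]
    {Xs : ℕ → Ω → X}
    (H : Hyp Q V c ρ π) (hch : IsMarkovChain P Xs π Q)
    (hY : Nice V π Y) (hY0 : ∫ x, Y x ∂π = 0) {N γ C : ℝ} (hN : 0 ≤ N) (hγ : 0 ≤ γ)
    (hC : C = 2*c*∫ x, V x ∂π)
    (hbd : ∀ k : ℕ, 1 ≤ k → ∀ᵐ x ∂π, |Y x| ≤ hk N γ k * V x ^ (1/(2*(k:ℝ))))
    (n q : ℕ) (hq : 1 ≤ q) :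
    PowerSeries.coeff (2*q) (Fser P Xs Y n) ≤
      (PowerSeries.coeff 2 (Fser P Xs Y n))^q / q.factorial
      + ∑ u ∈ Icc 1 (q-1), (n:ℝ)^u/u.factorial *
        ∑ k ∈ univ.filter (fun k : Fin u → Fin (2*q+1) =>
          (∀ i, 2 ≤ (k i:ℕ)) ∧ ∑ i, (k i:ℕ) = 2*q), ∏ i, Dt N γ C ρ (k i) := by
  have hpi := one_le_piV H
  have hc := H.hc
  have hC0 : 0 ≤ C := by rw [hC]; positivity
  have hρ := H.hρ0
  have hs0 : 0 ≤ ρ^((1:ℝ)/6) := by positivity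
  have hs1 : ρ^((1:ℝ)/6) < 1 := Real.rpow_lt_one H.hρ0.le H.hρ1 (by norm_num)
  have hK : 0 ≤ Kc N γ C := by unfold Kc; positivity
  refine RosA.partA' (Fser P Xs Y) (bser Q π Y) (Dser N γ C ρ)
    (Kc N γ C ^2 * (1/(1-ρ^((1:ℝ)/6)))^3) Fser_zero (fun n => renewal H hch hY n)
    (coeff_b0 H) ?_ ?_ ?_ ?_ ?_ n q hq _ (fun k hk2 => D_le_Dt hN hγ hC0 H.hρ0 H.hρ1 k hk2)
  · intro l; rw [coeff_b l 1 le_rfl, int_psi_one H hY hY0 l]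
  · simp [Dser]
  · simp [Dser]
  · intro k M
    by_cases hk0 : k = 0
    · subst hk0; simp [coeff_b0 H, Dser]
    by_cases hk1 : k = 1
    · subst hk1; simp [coeff_b, int_psi_one H hY hY0, Dser]
    unfold Dser
    rw [PowerSeries.coeff_mk, if_neg (by omega)]
    by_cases hk2 : k = 2
    · subst hk2
      rw [if_pos rfl]
      refine (Finset.sum_le_sum fun l _ => b_two H hY hN hγ hC hbd l).trans ?_
      rw [← Finset.mul_sum]
      refine mul_le_mul_of_nonneg_left ?_ hK
      rw [one_div (1 - _)]
      exact (Summable.sum_le_tsum _ (fun i _ => by positivity)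
        (summable_geometric_of_lt_one hs0 hs1)).trans_eq (tsum_geometric_of_lt_one hs0 hs1)
    · rw [if_neg hk2]
      have hkp : (0:ℝ) < k := by exact_mod_cast Nat.pos_of_ne_zero hk0
      have h := a_bound H hY (hk_nonneg hN hγ k) (β := 1/(2*(k:ℝ))) (by positivity) hC rfl
        (hbd k (by omega)) k (by omega) (by field_simp; norm_num) M
      simpa only [coeff_b _ k (show 1 ≤ k by omega)] using h
  · intro M
    have hD2 : PowerSeries.coeff 2 (Dser N γ C ρ) = Kc N γ C * (1/(1-ρ^((1:ℝ)/6))) := by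
      simp [Dser]
    rw [hD2]
    have hs2 : 0 < 1 - ρ^((1:ℝ)/6) := by linarith
    calc _ ≤ ∑ l ∈ range M, (Kc N γ C * (ρ^((1:ℝ)/6))^l) *
          (((l:ℝ)+1) * (Kc N γ C * (1/(1-ρ^((1:ℝ)/6))))) := by
          refine Finset.sum_le_sum fun l _ => ?_
          refine mul_le_mul_of_nonneg_right (b_two H hY hN hγ hC hbd l) (by positivity)
      _ = Kc N γ C ^2 * (1/(1-ρ^((1:ℝ)/6))) * ∑ l ∈ range M, ((l:ℝ)+1) * (ρ^((1:ℝ)/6))^l := by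
          rw [Finset.mul_sum]; refine Finset.sum_congr rfl fun l _ => ?_; ring
      _ ≤ Kc N γ C ^2 * (1/(1-ρ^((1:ℝ)/6))) * (1/(1-ρ^((1:ℝ)/6)))^2 :=
          mul_le_mul_of_nonneg_left (sum_geo hs0 hs1 M) (by positivity)
      _ = _ := by ring

end

lemma prod_Dt {N γ C ρ : ℝ} (hγ : 0 ≤ γ) (h0 : 0 < ρ) {u q : ℕ}
    (k : Fin u → Fin (2*q+1)) (h2 : ∀ i, 2 ≤ (k i : ℕ)) (hs : ∑ i, (k i : ℕ) = 2*q) :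
    ∏ i, Dt N γ C ρ (k i) = C^(2*q) * (2*γ)^(2*γ*q) * N^(2*q) *
      (∏ i, ((k i : ℕ).factorial : ℝ)^(γ+2)) *
      (ρ^((u:ℝ)/2) * Real.log (1/ρ)^(2*q-u))⁻¹ := by
  unfold Dt
  have hsum : ∑ i, ((k i : ℕ) - 1) = 2*q - u := by
    have : ∑ i, (((k i : ℕ) - 1) + 1) = 2*q := by
      refine Eq.trans (Finset.sum_congr rfl fun i _ => ?_) hs
      have := h2 i; omega
    rw [Finset.sum_add_distrib] at this
    simp at this
    omega
  rw [Finset.prod_mul_distrib, Finset.prod_mul_distrib, Finset.prod_mul_distrib,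
    Finset.prod_pow_eq_pow_sum, Finset.prod_pow_eq_pow_sum, hs, hsum]
  simp only [Finset.prod_const, Finset.card_univ, Fintype.card_fin]
  have e1 : ((2*γ)^γ)^(2*q) = (2*γ)^(2*γ*q) := by
    rw [← Real.rpow_natCast, ← Real.rpow_mul (by positivity)]
    congr 1; push_cast; ring
  have e2 : (ρ^((1:ℝ)/2))^u = ρ^((u:ℝ)/2) := by
    rw [← Real.rpow_natCast, ← Real.rpow_mul h0.le]
    congr 1; ring
  rw [mul_pow, mul_pow, e1, inv_pow, inv_pow, e2, mul_inv]

end RosD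

/-- Theorem 3 (Rosenthal-type inequality, stationary chain, class `L_{W^γ}`, `W = log V`). -/
theorem rosenthal_log_V
    {X : Type*} [MeasurableSpace X]
    (Q : ProbabilityTheory.Kernel X X) [ProbabilityTheory.IsMarkovKernel Q]
    (V : X → ℝ) (lam b : ℝ) (m : ℕ) (eps d c ρ : ℝ) (piQ : Measure X)
    [IsProbabilityMeasure piQ]
    -- Assumption A1
    (hV : Measurable V) (hVe : ∀ x, Real.exp 1 ≤ V x)
    (hlam0 : 0 < lam) (hlam1 : lam < 1) (hb : 0 ≤ b)
    (hdrift : ∀ x, ∫ y, V y ∂(Q x) ≤ lam * V x + b)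
    -- Assumption A2
    (hm : 1 ≤ m) (heps0 : 0 < eps) (heps1 : eps < 1) (hd : 0 ≤ d)
    (hsmallcond : lam + 2 * b / (1 + d) < 1)
    (hsmall : ∃ ν : Measure X, IsProbabilityMeasure ν ∧
      ∀ x, V x ≤ d → ∀ A : Set X, MeasurableSet A →
        ENNReal.ofReal eps * ν A ≤ (kIter Q m) x A)
    -- piQ is the unique invariant probability measure, with piQ(V) < ∞
    (hinv : piQ.bind (fun x => Q x) = piQ)
    (huniq : ∀ π' : Measure X, IsProbabilityMeasure π' →
      π'.bind (fun x => Q x) = π' → π' = piQ)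
    (hpiV : Integrable V piQ)
    -- geometric ergodicity constants c ≥ 1, ρ ∈ (0,1)
    (hc : 1 ≤ c) (hρ0 : 0 < ρ) (hρ1 : ρ < 1)
    (herg : ∀ ξ : Measure X, IsProbabilityMeasure ξ → Integrable V ξ → ∀ k : ℕ,
      wTV V (ξ.bind (fun x => (kIter Q k) x)) piQ ≤
        c * ((∫ x, V x ∂ξ) + ∫ x, V x ∂piQ) * ρ ^ k)
    -- γ, the exponent q and the function g ∈ L_{W^γ}
    (γ : ℝ) (hγ : 0 ≤ γ) (q : ℕ) (hq : 1 ≤ q)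
    (g : X → ℝ) (hg : MemL (fun x => Real.log (V x) ^ γ) g)
    (n : ℕ) (hn : 1 ≤ n)
    -- the stationary canonical chain
    {Ω : Type*} [MeasurableSpace Ω] (P : Measure Ω) [IsProbabilityMeasure P]
    (Xs : ℕ → Ω → X) (hchain : IsMarkovChain P Xs piQ Q) :
    (∫ ω, |∑ ℓ ∈ Finset.range n, (g (Xs ℓ ω) - ∫ x, g x ∂piQ)| ^ (2 * q) ∂P) ≤
      gaussMoment q *
        (∫ ω, (∑ ℓ ∈ Finset.range n, (g (Xs ℓ ω) - ∫ x, g x ∂piQ)) ^ 2 ∂P) ^ q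
      + (2 * c * ∫ x, V x ∂piQ) ^ (2 * q) * (2 * γ) ^ (2 * γ * q) *
          vnorm (fun x => Real.log (V x) ^ γ)
            (fun x => g x - ∫ y, g y ∂piQ) ^ (2 * q) *
          ∑ u ∈ Finset.Icc 1 (q - 1),
            Bcoef γ u q * (n : ℝ) ^ u /
              (ρ ^ ((u : ℝ) / 2) * Real.log (1 / ρ) ^ (2 * q - u)) := by
  have hlog : ∀ x, 1 ≤ Real.log (V x) := fun x => by
    rw [Real.le_log_iff_exp_le (lt_of_lt_of_le (Real.exp_pos 1) (hVe x))]; exact hVe x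
  have hV1 : ∀ x, 1 ≤ V x := fun x => (Real.one_le_exp (by norm_num)).trans (hVe x)
  have hW1 : ∀ x, 1 ≤ Real.log (V x) ^ γ := fun x => Real.one_le_rpow (hlog x) hγ
  have H : RosC.Hyp Q V c ρ piQ :=
    ⟨inferInstance, inferInstance, hV, hV1, hinv, hpiV, hc, hρ0, hρ1, herg⟩
  have : Nonempty X := by
    by_contra h
    rw [not_nonempty_iff] at h
    have := measure_univ (μ := piQ)
    rw [Set.univ_eq_empty_iff.mpr h] at this
    simp at this
  -- growth bounds
  have hgen : ∀ (f : X → ℝ) (M : ℝ), (∀ x, |f x| ≤ M * Real.log (V x) ^ γ) → 0 ≤ M →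
      ∀ β : ℝ, 0 < β → ∀ x, |f x| ≤ M * (γ / (Real.exp 1 * β)) ^ γ * V x ^ β := by
    intro f M hf hM β hβ x
    refine (hf x).trans ?_
    rw [mul_assoc]
    exact mul_le_mul_of_nonneg_left (RosB.log_rpow_le hγ hβ (hV1 x)) hM
  have hnice : ∀ (f : X → ℝ) (M : ℝ), Measurable f →
      (∀ x, |f x| ≤ M * Real.log (V x) ^ γ) → 0 ≤ M → RosC.Nice V piQ f := by
    intro f M hfm hf hM
    refine ⟨hfm, fun α hα _ => ⟨M * (γ / (Real.exp 1 * α)) ^ γ, ?_, ?_⟩⟩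
    · positivity
    · exact Filter.Eventually.of_forall (hgen f M hf hM α hα)
  obtain ⟨M, hM⟩ := hg.bdd
  have hgM : ∀ x, |g x| ≤ M * Real.log (V x) ^ γ := fun x => by
    have h := hM (Set.mem_range_self x)
    have := hW1 x
    rwa [div_le_iff₀ (by linarith)] at h
  have hM0 : 0 ≤ M := by
    obtain ⟨x⟩ := ‹Nonempty X›
    have h := hM (Set.mem_range_self x)
    refine le_trans ?_ h
    have := hW1 x
    positivity
  have hgint : Integrable g piQ := RosC.Nice.integrable H (hnice g M hg.meas hgM hM0)
  set m0 := ∫ x, g x ∂piQ with hm0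
  set Y : X → ℝ := fun x => g x - m0 with hYdef
  set N := vnorm (fun x => Real.log (V x) ^ γ) Y with hNdef
  have hN : 0 ≤ N := by
    rw [hNdef]; unfold vnorm
    refine Real.iSup_nonneg fun x => ?_
    have := hW1 x
    positivity
  have hYN : ∀ x, |Y x| ≤ N * Real.log (V x) ^ γ := by
    intro x
    have hb : BddAbove (Set.range fun x => |Y x| / Real.log (V x) ^ γ) := by
      refine ⟨M + |m0|, ?_⟩
      rintro _ ⟨y, rfl⟩
      have h1 := hW1 y
      show |Y y| / Real.log (V y) ^ γ ≤ M + |m0|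
      rw [div_le_iff₀ (by linarith)]
      have h2 := hgM y
      have h3 : |Y y| ≤ |g y| + |m0| := abs_sub _ _
      nlinarith [abs_nonneg m0]
    have h := le_ciSup hb x
    have h1 := hW1 x
    change |Y x| / Real.log (V x) ^ γ ≤ N at h
    rwa [div_le_iff₀ (by linarith)] at h
  have hYm : Measurable Y := hg.meas.sub_const _
  have hYnice : RosC.Nice V piQ Y := hnice Y N hYm hYN hN
  have hY0 : ∫ x, Y x ∂piQ = 0 := by
    rw [hYdef, integral_sub hgint (integrable_const _)]
    simp [hm0]
  have hbd : ∀ k : ℕ, 1 ≤ k → ∀ᵐ x ∂piQ, |Y x| ≤ RosB.hk N γ k * V x ^ (1/(2*(k:ℝ))) := by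
    intro k hk
    have hkp : (0:ℝ) < k := by exact_mod_cast hk
    exact Filter.Eventually.of_forall (hgen Y N hYN hN (1/(2*(k:ℝ))) (by positivity))
  have key := RosD.core H hchain hYnice hY0 hN hγ rfl hbd n q hq
  set C := 2 * c * ∫ x, V x ∂piQ with hCdef
  have eF : ∀ k, PowerSeries.coeff k (RosC.Fser P Xs Y n)
      = (∫ ω, (∑ ℓ ∈ Finset.range n, (g (Xs ℓ ω) - m0)) ^ k ∂P) / k.factorial := by
    intro k
    unfold RosC.Fser RosC.Ssum
    rw [PowerSeries.coeff_mk, integral_div]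
  rw [eF, eF] at key
  have habs : (∫ ω, |∑ ℓ ∈ Finset.range n, (g (Xs ℓ ω) - m0)| ^ (2 * q) ∂P)
      = ∫ ω, (∑ ℓ ∈ Finset.range n, (g (Xs ℓ ω) - m0)) ^ (2 * q) ∂P := by
    refine integral_congr_ae (Filter.Eventually.of_forall fun ω => ?_)
    exact Even.pow_abs (even_two_mul q) _
  rw [habs]
  have hf : (0:ℝ) < (2*q).factorial := by positivity
  rw [div_le_iff₀ hf] at key
  refine key.trans (le_of_eq ?_)
  rw [add_mul]
  congr 1
  · unfold gaussMoment
    rw [div_pow]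
    simp only [Nat.factorial_two, Nat.cast_ofNat]
    field_simp
  · rw [Finset.sum_mul, Finset.mul_sum]
    refine Finset.sum_congr rfl fun u _ => ?_
    unfold Bcoef
    have e : ∀ k ∈ Finset.univ.filter (fun k : Fin u → Fin (2 * q + 1) =>
          (∀ i, 2 ≤ (k i : ℕ)) ∧ ∑ i, (k i : ℕ) = 2 * q),
        ∏ i, RosD.Dt N γ C ρ (k i) = C^(2*q) * (2*γ)^(2*γ*q) * N^(2*q) *
          (ρ^((u:ℝ)/2) * Real.log (1/ρ)^(2*q-u))⁻¹ *
          (∏ i, ((k i : ℕ).factorial : ℝ)^(γ+2)) := by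
      intro k hk
      rw [Finset.mem_filter] at hk
      rw [RosD.prod_Dt hγ hρ0 k hk.2.1 hk.2.2]
      ring
    rw [Finset.sum_congr rfl e, ← Finset.mul_sum, div_eq_mul_inv _ (ρ^((u:ℝ)/2) * _)]
    ring
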